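/- arXiv:2604.21582 — 2 statements merged into one kernel-verified Lean document; each statement's English description precedes it below -/
import Mathlib

section
/- Let $z, z' \in \mathbb{H}$ and $t, t' > 0$, and let $A(t,r) = \frac{1}{2\sqrt{2}\pi}\frac{\mathbf{1}(t > r)}{\sqrt{\cosh t - \cosh r}}$ be the Abel kernel. Then $\int_{\mathbb{H}} A(t, d(z,x))\,A(t', d(z',x))\,dx \leq \frac{\mathbf{1}_{[0,t+t']}(d(z,z'))}{\sqrt{\sinh(\max(|t-t'|,\, d(z,z')))}}$. -/
open MeasureTheory UpperHalfPlane Real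
open scoped ENNReal

noncomputable instance : MeasurableSpace UpperHalfPlane := borel _
instance : BorelSpace UpperHalfPlane := ⟨rfl⟩

/-- The hyperbolic area measure on the upper half-plane model of `ℍ`. -/
noncomputable def hypVolume : Measure UpperHalfPlane :=
  ((volume : Measure ℂ).comap (UpperHalfPlane.coe)).withDensity
    fun z => ENNReal.ofReal (1 / z.im ^ 2)

/-- The Abel kernel `A(t,r)`, the integral kernel of the hyperbolic wave propagator. -/
noncomputable def abelKernel (t r : ℝ) : ℝ :=
  (1 / (2 * Real.sqrt 2 * Real.pi)) *
    (if r < t then 1 / Real.sqrt (Real.cosh t - Real.cosh r) else 0)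

/-- Fundamental theorem of calculus for `lintegral` on an open interval,
for a monotone primitive. -/
lemma lintegral_Ioo_deriv_eq {a b : ℝ} (hab : a ≤ b) {g g' : ℝ → ℝ}
    (hc : ContinuousOn g (Set.Icc a b)) (hd : ∀ x ∈ Set.Ioo a b, HasDerivAt g (g' x) x)
    (h0 : ∀ x ∈ Set.Ioo a b, 0 ≤ g' x) :
    ∫⁻ x in Set.Ioo a b, ENNReal.ofReal (g' x) = ENNReal.ofReal (g b - g a) := by
  have hi := intervalIntegral.integrableOn_deriv_of_nonneg hc hd h0
  rw [← ofReal_integral_eq_lintegral_ofReal (hi.mono_set Set.Ioo_subset_Ioc_self)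
    ((ae_restrict_iff' measurableSet_Ioo).2 (.of_forall h0)), ← integral_Ioc_eq_integral_Ioo,
    ← intervalIntegral.integral_of_le hab,
    intervalIntegral.integral_eq_sub_of_hasDerivAt_of_le hab hc hd
      ((intervalIntegrable_iff_integrableOn_Ioc_of_le hab).2 hi)]

lemma lintegral_arcsine {a b : ℝ} (hab : a < b) :
    ∫⁻ v in Set.Ioo a b, ENNReal.ofReal (1 / √((v - a) * (b - v))) = ENNReal.ofReal π := by
  have hba : 0 < b - a := sub_pos.2 hab
  have := lintegral_Ioo_deriv_eq hab.le (g := fun v => arcsin ((2 * v - a - b) / (b - a)))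
    (g' := fun v => 1 / √((v - a) * (b - v)))
    (continuous_arcsin.comp (by fun_prop)).continuousOn ?_ (fun _ _ => by positivity)
  · rw [this]
    have h1 : (2 * b - a - b) / (b - a) = 1 := by rw [div_eq_one_iff_eq hba.ne']; ring
    have h2 : (2 * a - a - b) / (b - a) = -1 := by rw [div_eq_iff hba.ne']; ring
    simp only [h1, h2, arcsin_one, arcsin_neg_one]
    congr 1; ring
  · rintro v ⟨h1, h2⟩
    have h1' : 0 < v - a := sub_pos.2 h1
    have h2' : 0 < b - v := sub_pos.2 h2
    have e1 : (2 * v - a - b) / (b - a) ≠ -1 := by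
      rw [Ne, div_eq_iff hba.ne']; intro h; linarith
    have e2 : (2 * v - a - b) / (b - a) ≠ 1 := by
      rw [Ne, div_eq_iff hba.ne']; intro h; linarith
    have hd : HasDerivAt (fun v => (2 * v - a - b) / (b - a)) (2 / (b - a)) v := by
      simpa using ((((hasDerivAt_id v).const_mul 2).sub_const a).sub_const b).div_const (b - a)
    convert! (hasDerivAt_arcsin e1 e2).comp v hd using 1
    have : 1 - ((2 * v - a - b) / (b - a)) ^ 2 = (v - a) * (b - v) * (2 / (b - a)) ^ 2 := by
      field_simp; ring
    rw [this, sqrt_mul (x := (v - a) * (b - v)) (by positivity), sqrt_sq (by positivity)]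
    have : 0 < √((v - a) * (b - v)) := by positivity
    field_simp

lemma lintegral_arcsine_div {a b c : ℝ} (hab : a < b) (hbc : b < c) :
    ∫⁻ v in Set.Ioo a b, ENNReal.ofReal (1 / (c - v) * (1 / √((v - a) * (b - v)))) =
      ENNReal.ofReal (π / √((c - a) * (c - b))) := by
  have hba : 0 < b - a := sub_pos.2 hab
  have hcb : 0 < c - b := sub_pos.2 hbc
  have hca : 0 < c - a := by linarith
  set S := √((c - a) * (c - b)) with hS
  have hS0 : 0 < S := by positivity
  have hS2 : S ^ 2 = (c - a) * (c - b) := sq_sqrt (by positivity)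
  -- the argument is affine in `1 / (c - v)`
  have := lintegral_Ioo_deriv_eq hab.le
    (g := fun v => arcsin ((2 * ((c - a) * (c - b)) / (c - v) - (c - a) - (c - b)) / (b - a)) / S)
    (g' := fun v => 1 / (c - v) * (1 / √((v - a) * (b - v)))) ?_ ?_ ?_
  · rw [this]
    have h1 : (2 * ((c - a) * (c - b)) / (c - b) - (c - a) - (c - b)) / (b - a) = 1 := by
      field_simp; ring
    have h2 : (2 * ((c - a) * (c - b)) / (c - a) - (c - a) - (c - b)) / (b - a) = -1 := by
      field_simp; ring
    simp only [h1, h2, arcsin_one, arcsin_neg_one]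
    congr 1; ring
  · refine ContinuousOn.div_const (continuous_arcsin.comp_continuousOn ?_) _
    refine ContinuousOn.div_const (.sub (.sub (.div (by fun_prop) (by fun_prop) ?_)
      (by fun_prop)) (by fun_prop)) _
    intro x hx; linarith [hx.2]
  · rintro v ⟨h1, h2⟩
    have h1' : 0 < v - a := sub_pos.2 h1
    have h2' : 0 < b - v := sub_pos.2 h2
    have h3' : 0 < c - v := by linarith
    have key : 1 - ((2 * ((c - a) * (c - b)) / (c - v) - (c - a) - (c - b)) / (b - a)) ^ 2 =
        (v - a) * (b - v) * (2 * S / ((b - a) * (c - v))) ^ 2 := by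
      rw [div_pow (2 * S), mul_pow 2 S, hS2]
      field_simp; ring
    have kpos :
        0 < 1 - ((2 * ((c - a) * (c - b)) / (c - v) - (c - a) - (c - b)) / (b - a)) ^ 2 := by
      rw [key]; positivity
    have e1 : (2 * ((c - a) * (c - b)) / (c - v) - (c - a) - (c - b)) / (b - a) ≠ -1 := by
      intro h; rw [h] at kpos; norm_num at kpos
    have e2 : (2 * ((c - a) * (c - b)) / (c - v) - (c - a) - (c - b)) / (b - a) ≠ 1 := by
      intro h; rw [h] at kpos; norm_num at kpos
    have hd : HasDerivAt
        (fun v => (2 * ((c - a) * (c - b)) / (c - v) - (c - a) - (c - b)) / (b - a))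
        (2 * ((c - a) * (c - b)) / (c - v) ^ 2 / (b - a)) v := by
      have := (((((hasDerivAt_id v).const_sub c).inv h3'.ne').const_mul
        (2 * ((c - a) * (c - b)))).sub_const (c - a)).sub_const (c - b) |>.div_const (b - a)
      convert! this using 1
      simp; ring
    convert! ((hasDerivAt_arcsin e1 e2).comp v hd).div_const S using 1
    rw [key, sqrt_mul (x := (v - a) * (b - v)) (by positivity), sqrt_sq (by positivity), ← hS2]
    have : 0 < √((v - a) * (b - v)) := by positivity
    field_simp
  · rintro v ⟨h1, h2⟩
    have : 0 < c - v := by linarith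
    positivity

/-- An upper bound for a complete elliptic integral of the first kind. -/
lemma lintegral_elliptic_le {a b c : ℝ} (hab : a < b) (hbc : b < c) :
    ∫⁻ v in Set.Ioo a b, ENNReal.ofReal (1 / √(c - v) * (1 / √((v - a) * (b - v)))) ≤
      ENNReal.ofReal (π / √√((c - a) * (c - b))) := by
  have hcb : 0 < c - b := sub_pos.2 hbc
  have hca : 0 < c - a := by linarith
  set S := √((c - a) * (c - b)) with hS
  have hS0 : 0 < S := by positivity
  set M := √S with hM
  have hM0 : 0 < M := by positivity
  have hM2 : M ^ 2 = S := sq_sqrt hS0.le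
  calc _ ≤ ∫⁻ v in Set.Ioo a b,
        (ENNReal.ofReal (M / 2) * ENNReal.ofReal (1 / (c - v) * (1 / √((v - a) * (b - v)))) +
        ENNReal.ofReal (1 / (2 * M)) * ENNReal.ofReal (1 / √((v - a) * (b - v)))) := by
        refine setLIntegral_mono' measurableSet_Ioo fun v hv => ?_
        have hcv : 0 < c - v := by linarith [hv.2]
        have hw : 0 ≤ 1 / √((v - a) * (b - v)) := by positivity
        rw [← ENNReal.ofReal_mul (by positivity), ← ENNReal.ofReal_mul (by positivity),
          ← ENNReal.ofReal_add (by positivity) (by positivity)]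
        refine ENNReal.ofReal_le_ofReal ?_
        rw [← mul_assoc, ← add_mul]
        refine mul_le_mul_of_nonneg_right ?_ hw
        set w := √(c - v)
        have hw0 : 0 < w := by positivity
        rw [show c - v = w ^ 2 from (sq_sqrt hcv.le).symm]
        rw [← sub_nonneg]
        have : M / 2 * (1 / w ^ 2) + 1 / (2 * M) - 1 / w = (M - w) ^ 2 / (2 * M * w ^ 2) := by
          field_simp; ring
        rw [this]; positivity
    _ = ENNReal.ofReal (M / 2) * ENNReal.ofReal (π / S) +
        ENNReal.ofReal (1 / (2 * M)) * ENNReal.ofReal π := by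
        rw [lintegral_add_right _ (by fun_prop), lintegral_const_mul _ (by fun_prop),
          lintegral_const_mul _ (by fun_prop), lintegral_arcsine hab, lintegral_arcsine_div hab hbc]
    _ = ENNReal.ofReal (π / M) := by
        rw [← ENNReal.ofReal_mul (by positivity), ← ENNReal.ofReal_mul (by positivity),
          ← ENNReal.ofReal_add (by positivity) (by positivity), ← hM2]
        congr 1; field_simp; ring

lemma lintegral_elliptic_le' {a b c : ℝ} (hab : a < b) (hcb : c ≠ b) :
    ∫⁻ v, ENNReal.ofReal (1 / √(c - v)) * ENNReal.ofReal (1 / √((v - a) * (b - v))) ≤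
      ENNReal.ofReal (π / √√((max c b - a) * |c - b|)) := by
  have key : ∀ v, v ∉ Set.Ioo a (min b c) →
      ENNReal.ofReal (1 / √(c - v)) * ENNReal.ofReal (1 / √((v - a) * (b - v))) = 0 := by
    intro v hv
    by_cases h : c ≤ v
    · simp [sqrt_eq_zero_of_nonpos (sub_nonpos.2 h)]
    · have : (v - a) * (b - v) ≤ 0 := by
        rcases le_or_gt v a with h1 | h1
        · exact mul_nonpos_of_nonpos_of_nonneg (by linarith) (by linarith)
        · have : b ≤ v := by
            by_contra h2
            exact hv ⟨h1, lt_min (not_le.1 h2) (not_le.1 h)⟩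
          exact mul_nonpos_of_nonneg_of_nonpos (by linarith) (by linarith)
      simp [sqrt_eq_zero_of_nonpos this]
  rw [← setLIntegral_eq_of_support_subset (s := Set.Ioo a (min b c)) (f := fun v => _)
    (fun v hv => by by_contra h; exact hv (key v h))]
  rcases le_or_gt (min b c) a with h | h
  · simp [Set.Ioo_eq_empty_of_le h]
  rcases hcb.lt_or_gt with h1 | h1
  · rw [min_eq_right h1.le] at *
    rw [max_eq_right h1.le, abs_of_neg (by linarith), neg_sub]
    refine le_trans (le_of_eq ?_) (lintegral_elliptic_le h h1)
    refine setLIntegral_congr_fun measurableSet_Ioo fun v hv => ?_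
    have p1 : 0 < c - v := by linarith [hv.2]
    have p2 : 0 < v - a := by linarith [hv.1]
    have p3 : 0 < b - v := by linarith
    rw [← ENNReal.ofReal_mul (by positivity)]
    rw [sqrt_mul p2.le, sqrt_mul p2.le]
    congr 1; field_simp
  · rw [min_eq_left h1.le] at *
    rw [max_eq_left h1.le, abs_of_pos (by linarith)]
    refine le_trans (le_of_eq ?_) (lintegral_elliptic_le h h1)
    refine setLIntegral_congr_fun measurableSet_Ioo fun v hv => ?_
    rw [← ENNReal.ofReal_mul (by positivity)]

/-- The substitution `u = cosh r`. -/
lemma lintegral_Ioi_one_eq_cosh (G : ℝ → ℝ≥0∞) :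
    ∫⁻ u in Set.Ioi 1, G u = ∫⁻ r in Set.Ioi 0, ENNReal.ofReal (sinh r) * G (cosh r) := by
  have himg : cosh '' Set.Ioi 0 = Set.Ioi 1 := by
    ext u
    constructor
    · rintro ⟨r, hr, rfl⟩
      exact one_lt_cosh.2 (ne_of_gt hr)
    · intro hu
      exact ⟨arcosh u, arcosh_pos hu, cosh_arcosh (le_of_lt hu)⟩
  rw [← himg, lintegral_image_eq_lintegral_abs_deriv_mul measurableSet_Ioi
    (fun x _ => (hasDerivAt_cosh x).hasDerivWithinAt)
    (cosh_strictMonoOn.injOn.mono Set.Ioi_subset_Ici_self)]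
  refine setLIntegral_congr_fun measurableSet_Ioi fun r hr => ?_
  simp only [abs_of_pos (sinh_pos_iff.2 hr)]

/-- `∫₀^∞ (e^x - 1)^(-p) dx ≤ 1 / (p (1 - p))`. -/
lemma lintegral_exp_sub_one_rpow_le {p : ℝ} (hp0 : 0 < p) (hp1 : p < 1) :
    ∫⁻ x in Set.Ioi (0 : ℝ), ENNReal.ofReal ((exp x - 1) ^ (-p)) ≤
      ENNReal.ofReal (1 / (p * (1 - p))) := by
  have hq : 0 < 1 - p := by linarith
  set g : ℝ → ℝ := fun x => (1 - exp (-(p * x))) ^ (1 - p) / (p * (1 - p)) with hg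
  set g' : ℝ → ℝ := fun x => exp (-(p * x)) * (1 - exp (-(p * x))) ^ (-p) with hg'
  have pos : ∀ x ∈ Set.Ioi (0 : ℝ), 0 < 1 - exp (-(p * x)) := fun x hx => by
    have : exp (-(p * x)) < 1 := exp_lt_one_iff.2 (by have := mul_pos hp0 hx; linarith)
    linarith
  have hd : ∀ x ∈ Set.Ioi (0 : ℝ), HasDerivAt g (g' x) x := by
    intro x hx
    have h1 : HasDerivAt (fun x => 1 - exp (-(p * x))) (p * exp (-(p * x))) x := by
      have := (((hasDerivAt_id x).const_mul p).neg.exp).const_sub 1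
      convert! this using 1
      simp; ring
    convert! (h1.rpow_const (p := 1 - p) (Or.inl (pos x hx).ne')).div_const (p * (1 - p)) using 1
    simp only [hg']
    rw [show 1 - p - 1 = -p by ring]
    field_simp
  have hc : ContinuousWithinAt g (Set.Ici 0) 0 := by
    refine Continuous.continuousWithinAt ?_
    refine Continuous.div_const (Continuous.rpow_const (by fun_prop) fun _ => Or.inr hq.le) _
  have hg0 : ∀ x ∈ Set.Ioi (0 : ℝ), 0 ≤ g' x := fun x hx =>
    mul_nonneg (exp_pos _).le (rpow_nonneg (pos x hx).le _)
  have hl : Filter.Tendsto g Filter.atTop (nhds (1 / (p * (1 - p)))) := by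
    have h1 : Filter.Tendsto (fun x => 1 - exp (-(p * x))) Filter.atTop (nhds (1 - 0)) :=
      (tendsto_exp_neg_atTop_nhds_zero.comp
        (Filter.tendsto_id.const_mul_atTop hp0)).const_sub 1
    rw [sub_zero] at h1
    have := (h1.rpow_const (p := 1 - p) (Or.inl one_ne_zero)).div_const (p * (1 - p))
    rwa [one_rpow] at this
  have hi := integrableOn_Ioi_deriv_of_nonneg hc hd hg0 hl
  have hI := integral_Ioi_of_hasDerivAt_of_nonneg hc hd hg0 hl
  have hg00 : g 0 = 0 := by simp [hg, zero_rpow hq.ne']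
  calc _ ≤ ∫⁻ x in Set.Ioi (0 : ℝ), ENNReal.ofReal (g' x) := by
        refine setLIntegral_mono' measurableSet_Ioi fun x hx => ENNReal.ofReal_le_ofReal ?_
        have hx0 : (0 : ℝ) < x := hx
        have e : exp x - 1 = exp x * (1 - exp (-x)) := by
          rw [mul_sub, ← exp_add]; simp
        have hle : 1 - exp (-(p * x)) ≤ 1 - exp (-x) := by
          have : exp (-x) ≤ exp (-(p * x)) := exp_le_exp.2 (by nlinarith)
          linarith
        rw [e, mul_rpow (exp_pos _).le ((pos x hx).le.trans hle), ← exp_mul]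
        simp only [hg']
        rw [show x * -p = -(p * x) by ring]
        exact mul_le_mul_of_nonneg_left
          (rpow_le_rpow_of_nonpos (pos x hx) hle (by linarith)) (exp_pos _).le
    _ = _ := by
        rw [← ofReal_integral_eq_lintegral_ofReal hi
          ((ae_restrict_iff' measurableSet_Ioi).2 (.of_forall hg0)), hI, hg00, sub_zero]

lemma lintegral_hypVolume_eq (f : ℍ → ℝ≥0∞) :
    ∫⁻ x, f x ∂hypVolume =
      @lintegral ℍ UpperHalfPlane.instMeasurableSpace volume f := by
  have key : ∀ (m m' : MeasurableSpace ℍ) (g g' : ℍ → ℝ≥0∞), m = m' → g = g' →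
      @lintegral ℍ m (@Measure.withDensity ℍ m (@Measure.comap ℍ ℂ m _ (↑) volume) g) f =
      @lintegral ℍ m' (@Measure.withDensity ℍ m' (@Measure.comap ℍ ℂ m' _ (↑) volume) g') f := by
    rintro m _ g _ rfl rfl; rfl
  refine key _ _ _ _
    (@BorelSpace.measurable_eq ℍ _ UpperHalfPlane.instMeasurableSpace _).symm ?_
  ext z
  rw [← ENNReal.ofReal_coe_nnreal]
  simp [one_div]

lemma lintegral_hypVolume_smul (g : Matrix.SpecialLinearGroup (Fin 2) ℝ) (f : ℍ → ℝ≥0∞) :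
    ∫⁻ x, f (g • x) ∂hypVolume = ∫⁻ x, f x ∂hypVolume := by
  rw [lintegral_hypVolume_eq, lintegral_hypVolume_eq]
  let _ : MeasurableSpace ℍ := UpperHalfPlane.instMeasurableSpace
  exact (measurePreserving_smul (g : GL (Fin 2) ℝ) volume).lintegral_comp_emb
    (measurableEmbedding_const_smul _) f

lemma lintegral_hypVolume_eq_plane (F : ℝ × ℝ → ℝ≥0∞) (hF : Measurable F) :
    ∫⁻ x : ℍ, F (x.re, x.im) ∂hypVolume =
      ∫⁻ p in {p : ℝ × ℝ | 0 < p.2}, ENNReal.ofReal (1 / p.2 ^ 2) * F p := by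
  have hemb : MeasurableEmbedding (UpperHalfPlane.coe) :=
    UpperHalfPlane.isOpenEmbedding_coe.measurableEmbedding
  have hre : Measurable fun x : ℍ => x.re := UpperHalfPlane.continuous_re.measurable
  have him : Measurable fun x : ℍ => x.im := UpperHalfPlane.continuous_im.measurable
  have hrange : Set.range UpperHalfPlane.coe =
      Complex.measurableEquivRealProd ⁻¹' {p : ℝ × ℝ | 0 < p.2} := by
    rw [UpperHalfPlane.range_coe]; rfl
  rw [hypVolume, lintegral_withDensity_eq_lintegral_mul _ (by fun_prop) (by fun_prop)]
  have := hemb.lintegral_map (μ := (volume : Measure ℂ).comap UpperHalfPlane.coe)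
    (fun w => ENNReal.ofReal (1 / w.im ^ 2) * F (w.re, w.im))
  simp only [UpperHalfPlane.coe_re, UpperHalfPlane.coe_im] at this
  simp only [Pi.mul_apply]
  rw [← this, hemb.map_comap, hrange,
    ← Complex.volume_preserving_equiv_real_prod.setLIntegral_comp_preimage_emb
      Complex.measurableEquivRealProd.measurableEmbedding]
  rfl

/-- The Gram determinant of three points of `ℍ` at mutual distances with hyperbolic cosines
`c`, `u`, `v`. -/
noncomputable def gramDet (c u v : ℝ) : ℝ := (u ^ 2 - 1) * (c ^ 2 - 1) - (v - u * c) ^ 2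

/-- Bipolar coordinates on the upper half-plane with foci `i` and `E i`. -/
noncomputable def bipolar (E : ℝ) (p : ℝ × ℝ) : ℝ × ℝ :=
  ((p.1 ^ 2 + p.2 ^ 2 + 1) / (2 * p.2), (p.1 ^ 2 + p.2 ^ 2 + E ^ 2) / (2 * E * p.2))

lemma gramDet_bipolar {E : ℝ} (hE : 0 < E) {p : ℝ × ℝ} (hp : 0 < p.2) :
    gramDet ((E ^ 2 + 1) / (2 * E)) (bipolar E p).1 (bipolar E p).2 =
      (p.1 * (E ^ 2 - 1) / (2 * E * p.2)) ^ 2 := by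
  simp only [gramDet, bipolar]
  field_simp; ring

/-- The derivative of `bipolar`. -/
noncomputable def bipolarDeriv (E : ℝ) (p : ℝ × ℝ) : ℝ × ℝ →L[ℝ] ℝ × ℝ :=
  (Matrix.toLin (Module.Basis.finTwoProd ℝ) (Module.Basis.finTwoProd ℝ)
    !![p.1 / p.2, (p.2 ^ 2 - p.1 ^ 2 - 1) / (2 * p.2 ^ 2);
      p.1 / (E * p.2), (p.2 ^ 2 - p.1 ^ 2 - E ^ 2) / (2 * E * p.2 ^ 2)]).toContinuousLinearMap

lemma hasFDerivAt_bipolar {E : ℝ} (hE : 0 < E) {p : ℝ × ℝ} (hp : 0 < p.2) :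
    HasFDerivAt (bipolar E) (bipolarDeriv E p) p := by
  have h1 : HasFDerivAt (fun p : ℝ × ℝ => p.1) (ContinuousLinearMap.fst ℝ ℝ ℝ) p := hasFDerivAt_fst
  have h2 : HasFDerivAt (fun p : ℝ × ℝ => p.2) (ContinuousLinearMap.snd ℝ ℝ ℝ) p := hasFDerivAt_snd
  have a1 := (((h1.pow 2).add (h2.pow 2)).add_const 1).mul
    ((hasDerivAt_inv (x := 2 * p.2) (by positivity)).comp_hasFDerivAt p (h2.const_mul 2))
  have a2 := (((h1.pow 2).add (h2.pow 2)).add_const (E ^ 2)).mul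
    ((hasDerivAt_inv (x := 2 * E * p.2) (by positivity)).comp_hasFDerivAt p (h2.const_mul (2 * E)))
  have := a1.prodMk a2
  convert! this using 1
  rw [bipolarDeriv, Matrix.toLin_finTwoProd_toContinuousLinearMap]
  ext <;> simp <;> field_simp <;> ring

lemma det_bipolarDeriv {E : ℝ} (hE : 0 < E) {p : ℝ × ℝ} (hp : 0 < p.2) :
    (bipolarDeriv E p).det = p.1 * (1 - E ^ 2) / (2 * E * p.2 ^ 3) := by
  rw [bipolarDeriv, ContinuousLinearMap.det, LinearMap.coe_toContinuousLinearMap,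
    LinearMap.det_toLin, Matrix.det_fin_two_of]
  field_simp; ring

lemma lintegral_bipolar {E : ℝ} (hE : 0 < E) (hE1 : E ≠ 1) {s : ℝ} (hs : s ^ 2 = 1)
    (G : ℝ × ℝ → ℝ≥0∞) :
    ∫⁻ p in {p : ℝ × ℝ | 0 < s * p.1 ∧ 0 < p.2}, ENNReal.ofReal (1 / p.2 ^ 2) * G (bipolar E p) =
      ∫⁻ q in {q : ℝ × ℝ | 1 < q.1 ∧ 0 < gramDet ((E ^ 2 + 1) / (2 * E)) q.1 q.2},
        ENNReal.ofReal (1 / √(gramDet ((E ^ 2 + 1) / (2 * E)) q.1 q.2)) * G q := by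
  set S := {p : ℝ × ℝ | 0 < s * p.1 ∧ 0 < p.2} with hS
  have hSm : MeasurableSet S :=
    (measurableSet_lt measurable_const (measurable_fst.const_mul s)).inter
      (measurableSet_lt measurable_const measurable_snd)
  have hE2 : E ^ 2 - 1 ≠ 0 := by
    intro h; apply hE1; nlinarith
  have hinj : Set.InjOn (bipolar E) S := by
    rintro ⟨x, y⟩ ⟨hx, hy⟩ ⟨x', y'⟩ ⟨hx', hy'⟩ h
    simp only [bipolar, Prod.mk.injEq] at h hx hy hx' hy'
    obtain ⟨h1, h2⟩ := h
    rw [div_eq_div_iff (by positivity) (by positivity)] at h1 h2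
    have hyy : y = y' := by
      have : (E ^ 2 - 1) * (y - y') * 2 * E = 0 := by linear_combination E * h1 - h2
      have : y - y' = 0 := by simpa [hE2, hE.ne'] using this
      linarith
    subst hyy
    have hxx : (s * x) ^ 2 = (s * x') ^ 2 := by
      have : x ^ 2 = x' ^ 2 := by
        have : (x ^ 2 - x' ^ 2) * (2 * y) = 0 := by linear_combination h1
        have : x ^ 2 - x' ^ 2 = 0 := by simpa [hy.ne'] using this
        linarith
      rw [mul_pow, mul_pow, this]
    have := (pow_left_inj₀ hx.le hx'.le two_ne_zero).1 hxx
    have hs0 : s ≠ 0 := by rintro rfl; norm_num at hs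
    rw [mul_right_inj' hs0] at this
    rw [this]
  have himg : bipolar E '' S =
      {q : ℝ × ℝ | 1 < q.1 ∧ 0 < gramDet ((E ^ 2 + 1) / (2 * E)) q.1 q.2} := by
    ext ⟨u, v⟩
    constructor
    · rintro ⟨p, ⟨hp1, hp2⟩, hpq⟩
      have hp1' : p.1 ≠ 0 := by rintro h; simp [h] at hp1
      have hg := gramDet_bipolar hE hp2
      rw [hpq] at hg
      refine ⟨?_, ?_⟩
      · rw [← hpq]
        simp only [bipolar]
        rw [lt_div_iff₀ (by positivity)]
        have := sq_pos_of_ne_zero hp1'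
        nlinarith [sq_nonneg (p.2 - 1)]
      · simp only
        rw [hg]
        refine sq_pos_of_ne_zero (div_ne_zero (mul_ne_zero hp1' hE2) (by positivity))
    · rintro ⟨hu, hQ⟩
      simp only at hu hQ
      set W := (v * E - u) / (E ^ 2 - 1) with hW
      have hv : v = (u + (E ^ 2 - 1) * W) / E := by rw [hW]; field_simp; ring
      -- in terms of `W`, the ordinate is `1 / (2 W)`
      have hQ' : gramDet ((E ^ 2 + 1) / (2 * E)) u v =
          ((E ^ 2 - 1) / (2 * E)) ^ 2 * (4 * u * W - 1 - 4 * W ^ 2) := by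
        rw [gramDet, hv]; field_simp; ring
      rw [hQ'] at hQ
      have hpos : 0 < 4 * u * W - 1 - 4 * W ^ 2 := (pos_iff_pos_of_mul_pos hQ).1 (by positivity)
      have hW0 : 0 < W := by
        by_contra h
        nlinarith [sq_nonneg W]
      have hX : 0 < (4 * u * W - 1 - 4 * W ^ 2) / (4 * W ^ 2) := by positivity
      have hsq := sq_sqrt hX.le
      refine ⟨(s * √((4 * u * W - 1 - 4 * W ^ 2) / (4 * W ^ 2)), 1 / (2 * W)), ⟨?_, ?_⟩, ?_⟩
      · simp only
        rw [← mul_assoc, ← sq, hs, one_mul]; positivity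
      · simp only; positivity
      · simp only [bipolar, mul_pow, hs, hsq, hv, Prod.mk.injEq]
        constructor <;> field_simp <;> ring
  rw [← himg, lintegral_image_eq_lintegral_abs_det_fderiv_mul volume hSm
    (fun p hp => (hasFDerivAt_bipolar hE hp.2).hasFDerivWithinAt) hinj]
  refine setLIntegral_congr_fun hSm fun p hp => ?_
  obtain ⟨hp1, hp2⟩ := hp
  have hp1' : p.1 ≠ 0 := by rintro h; simp [h] at hp1
  have hnn : 0 < |p.1 * (E ^ 2 - 1) / (2 * E * p.2)| :=
    abs_pos.2 (div_ne_zero (mul_ne_zero hp1' hE2) (by positivity))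
  rw [← mul_assoc, ← ENNReal.ofReal_mul (abs_nonneg _), gramDet_bipolar hE hp2, sqrt_sq_eq_abs,
    det_bipolarDeriv hE hp2]
  congr 2
  rw [show p.1 * (1 - E ^ 2) / (2 * E * p.2 ^ 3) =
    -(1 / p.2 ^ 2 * (p.1 * (E ^ 2 - 1) / (2 * E * p.2))) by field_simp; ring, abs_neg, abs_mul,
    abs_of_pos (show 0 < 1 / p.2 ^ 2 by positivity)]
  field_simp

lemma measurable_gramDet (c : ℝ) : Measurable fun q : ℝ × ℝ => gramDet c q.1 q.2 := by
  unfold gramDet; fun_prop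

lemma lintegral_halfPlane_bipolar {E : ℝ} (hE : 0 < E) (hE1 : E ≠ 1) {G : ℝ × ℝ → ℝ≥0∞}
    (hG : Measurable G) :
    ∫⁻ p in {p : ℝ × ℝ | 0 < p.2}, ENNReal.ofReal (1 / p.2 ^ 2) * G (bipolar E p) =
      2 * ∫⁻ u in Set.Ioi 1, ∫⁻ v,
        ENNReal.ofReal (1 / √(gramDet ((E ^ 2 + 1) / (2 * E)) u v)) * G (u, v) := by
  have hnull : volume {p : ℝ × ℝ | p.1 = 0} = 0 := by
    have : {p : ℝ × ℝ | p.1 = 0} = ({0} : Set ℝ) ×ˢ Set.univ := by ext; simp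
    rw [this, Measure.volume_eq_prod, Measure.prod_prod]; simp
  have hsplit : ({p : ℝ × ℝ | 0 < p.2} : Set (ℝ × ℝ)) =ᵐ[volume]
      ({p : ℝ × ℝ | 0 < 1 * p.1 ∧ 0 < p.2} ∪ {p : ℝ × ℝ | 0 < -1 * p.1 ∧ 0 < p.2} : Set _) := by
    have : ∀ᵐ p : ℝ × ℝ, p.1 ≠ 0 := by rw [ae_iff]; simpa using hnull
    filter_upwards [this] with p hp
    refine propext ?_
    change 0 < p.2 ↔ ((0 < 1 * p.1 ∧ 0 < p.2) ∨ (0 < -1 * p.1 ∧ 0 < p.2))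
    rcases hp.lt_or_gt with h | h
    · have h' : ¬ 0 < p.1 := by linarith
      simp [h, h']
    · simp [h]
  have hm : MeasurableSet {p : ℝ × ℝ | 0 < -1 * p.1 ∧ 0 < p.2} :=
    (measurableSet_lt measurable_const (measurable_fst.const_mul (-1))).inter
      (measurableSet_lt measurable_const measurable_snd)
  have hd : Disjoint {p : ℝ × ℝ | 0 < 1 * p.1 ∧ 0 < p.2} {p : ℝ × ℝ | 0 < -1 * p.1 ∧ 0 < p.2} := by
    rw [Set.disjoint_left]
    rintro p ⟨h1, -⟩ ⟨h2, -⟩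
    linarith
  rw [setLIntegral_congr hsplit, lintegral_union hm hd, lintegral_bipolar hE hE1 (by norm_num),
    lintegral_bipolar hE hE1 (by norm_num), ← two_mul]
  congr 1
  set c := (E ^ 2 + 1) / (2 * E)
  have hgm := measurable_gramDet c
  have hsub : {q : ℝ × ℝ | 1 < q.1 ∧ 0 < gramDet c q.1 q.2} ⊆ Set.Ioi 1 ×ˢ Set.univ :=
    fun q hq => ⟨hq.1, trivial⟩
  have hQm : MeasurableSet {q : ℝ × ℝ | 1 < q.1 ∧ 0 < gramDet c q.1 q.2} :=
    (measurableSet_lt measurable_const measurable_fst).inter (measurableSet_lt measurable_const hgm)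
  have hzero : ∫⁻ q in (Set.Ioi (1 : ℝ) ×ˢ (Set.univ : Set ℝ)) \
      {q : ℝ × ℝ | 1 < q.1 ∧ 0 < gramDet c q.1 q.2},
        ENNReal.ofReal (1 / √(gramDet c q.1 q.2)) * G q = 0 := by
    refine setLIntegral_eq_zero ((measurableSet_Ioi.prod .univ).diff hQm) ?_
    rintro q ⟨hq1, hq2⟩
    have : gramDet c q.1 q.2 ≤ 0 := by
      by_contra h
      exact hq2 ⟨hq1.1, not_le.1 h⟩
    simp [sqrt_eq_zero_of_nonpos this]
  have := lintegral_inter_add_sdiff (μ := volume)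
    (fun q : ℝ × ℝ => ENNReal.ofReal (1 / √(gramDet c q.1 q.2)) * G q)
    (Set.Ioi (1 : ℝ) ×ˢ (Set.univ : Set ℝ)) hQm
  rw [hzero, add_zero, Set.inter_eq_self_of_subset_right hsub] at this
  rw [this, Measure.volume_eq_prod, ← Measure.prod_restrict, lintegral_prod, Measure.restrict_univ]
  exact Measurable.aemeasurable (.mul (by fun_prop) hG)

/-- Any two points of `ℍ` can be moved to the imaginary axis, the first one to `i`. -/
lemma exists_smul_eq_I_re_eq_zero (z z' : ℍ) :
    ∃ g : Matrix.SpecialLinearGroup (Fin 2) ℝ, g • z = UpperHalfPlane.I ∧ (g • z').re = 0 := by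
  set h := z.toSL2R⁻¹ with hh
  have hz : h • z = UpperHalfPlane.I := by
    rw [hh, inv_smul_eq_iff, UpperHalfPlane.toSL2R_smul_I]
  set w := h • z' with hw
  set ζ : ℂ := ⟨w.re ^ 2 + w.im ^ 2 - 1, 2 * w.re⟩ with hζ
  set θ := ζ.arg / 2 with hθ
  have h2θ : 2 * θ = ζ.arg := by rw [hθ]; ring
  have hc : ‖ζ‖ * cos (2 * θ) = w.re ^ 2 + w.im ^ 2 - 1 := by
    rw [h2θ, Complex.norm_mul_cos_arg]
  have hs : ‖ζ‖ * sin (2 * θ) = 2 * w.re := by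
    rw [h2θ, Complex.norm_mul_sin_arg]
  have hdet : (!![cos θ, sin θ; -sin θ, cos θ] : Matrix (Fin 2) (Fin 2) ℝ).det = 1 := by
    rw [Matrix.det_fin_two_of]
    nlinarith [sin_sq_add_cos_sq θ]
  set k : Matrix.SpecialLinearGroup (Fin 2) ℝ := ⟨_, hdet⟩ with hk
  have hkact : ∀ x : ℍ, ((k • x : ℍ) : ℂ) =
      ((cos θ : ℂ) * x + sin θ) / (-(sin θ : ℂ) * x + cos θ) := by
    intro x
    rw [UpperHalfPlane.coe_specialLinearGroup_apply]
    simp [hk]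
  refine ⟨k * h, ?_, ?_⟩
  · rw [mul_smul, hz]
    ext
    have hne : -(sin θ : ℂ) * Complex.I + cos θ ≠ 0 := by
      intro h0
      have h1 := congrArg Complex.re h0
      have h2 := congrArg Complex.im h0
      simp [-Complex.ofReal_sin, -Complex.ofReal_cos] at h1 h2
      have := sin_sq_add_cos_sq θ
      simp [h1, h2] at this
    rw [hkact, UpperHalfPlane.coe_I, div_eq_iff hne]
    linear_combination (sin θ : ℂ) * Complex.I_mul_I
  · rw [mul_smul, ← hw, ← UpperHalfPlane.coe_re, hkact, Complex.div_re, ← add_div]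
    refine div_eq_zero_iff.2 (Or.inl ?_)
    have : sin (2 * θ) * (1 - w.re ^ 2 - w.im ^ 2) + 2 * cos (2 * θ) * w.re = 0 := by
      rcases eq_or_ne ‖ζ‖ 0 with h0 | h0
      · rw [h0, zero_mul] at hc hs
        have hre : w.re = 0 := by linarith
        rw [show 1 - w.re ^ 2 - w.im ^ 2 = 0 by linarith, hre]; ring
      · refine (mul_right_inj' h0).1 ?_
        linear_combination (1 - w.re ^ 2 - w.im ^ 2) * hs + 2 * w.re * hc
    rw [sin_two_mul, cos_two_mul'] at this
    simp [-Complex.ofReal_sin, -Complex.ofReal_cos]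
    linear_combination this / 2

lemma lintegral_hypVolume_cosh_dist {z z' : ℍ} (hz : z ≠ z') {G : ℝ × ℝ → ℝ≥0∞}
    (hG : Measurable G) :
    ∫⁻ x, G (cosh (dist z x), cosh (dist z' x)) ∂hypVolume =
      2 * ∫⁻ u in Set.Ioi 1, ∫⁻ v,
        ENNReal.ofReal (1 / √(gramDet (cosh (dist z z')) u v)) * G (u, v) := by
  obtain ⟨g, hg, hg'⟩ := exists_smul_eq_I_re_eq_zero z z'
  set w := g • z' with hw
  have hE : 0 < w.im := w.im_pos
  have hE1 : w.im ≠ 1 := by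
    intro h
    apply hz
    refine MulAction.injective g ?_
    simp only [hg, ← hw]
    exact UpperHalfPlane.ext_re_im (by simp [hg']) (by simp [h])
  have hc : cosh (dist z z') = (w.im ^ 2 + 1) / (2 * w.im) := by
    rw [← dist_smul g z z', hg, ← hw, UpperHalfPlane.cosh_dist', hg']
    simp; ring
  rw [hc, ← lintegral_halfPlane_bipolar hE hE1 hG]
  have hb : Measurable (bipolar w.im) := by unfold bipolar; fun_prop
  rw [← lintegral_hypVolume_eq_plane (fun p => G (bipolar w.im p)) (hG.comp hb),
    ← lintegral_hypVolume_smul g (fun x => G (bipolar w.im (x.re, x.im)))]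
  refine lintegral_congr fun x => ?_
  rw [← dist_smul g z x, ← dist_smul g z' x, hg, ← hw]
  congr 1
  simp only [bipolar]
  rw [UpperHalfPlane.cosh_dist', UpperHalfPlane.cosh_dist', hg']
  simp only [UpperHalfPlane.I_re, UpperHalfPlane.I_im, Prod.mk.injEq]
  constructor
  · congr 1 <;> ring
  · congr 1; ring

lemma gramDet_cosh (D r v : ℝ) :
    gramDet (cosh D) (cosh r) v = (v - cosh (r - D)) * (cosh (r + D) - v) := by
  rw [gramDet, ← sinh_sq, ← sinh_sq, cosh_sub, cosh_add]
  ring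

lemma cosh_sub_lt_cosh_add {r D : ℝ} (hr : 0 < r) (hD : 0 < D) : cosh (r - D) < cosh (r + D) := by
  rw [cosh_sub, cosh_add]
  have := mul_pos (sinh_pos_iff.2 hr) (sinh_pos_iff.2 hD)
  linarith

lemma lintegral_gramDet {D r : ℝ} (hr : 0 < r) (hD : 0 < D) :
    ∫⁻ v, ENNReal.ofReal (1 / √(gramDet (cosh D) (cosh r) v)) = ENNReal.ofReal π := by
  rw [← lintegral_arcsine (cosh_sub_lt_cosh_add hr hD)]
  simp only [gramDet_cosh]
  symm
  refine setLIntegral_eq_of_support_subset fun v hv => ?_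
  by_contra h
  refine hv ?_
  have : (v - cosh (r - D)) * (cosh (r + D) - v) ≤ 0 := by
    have := cosh_sub_lt_cosh_add hr hD
    rcases le_or_gt v (cosh (r - D)) with h1 | h1
    · exact mul_nonpos_of_nonpos_of_nonneg (by linarith) (by linarith)
    · have : cosh (r + D) ≤ v := by
        by_contra h2
        exact h ⟨h1, not_le.1 h2⟩
      exact mul_nonpos_of_nonneg_of_nonpos (by linarith) (by linarith)
  simp [sqrt_eq_zero_of_nonpos this]

/-- The inverse square root singularity extended by zero, as in `abelKernel`. -/
noncomputable def invSqrt (s : ℝ) : ℝ≥0∞ := ENNReal.ofReal (1 / √s)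

lemma measurable_invSqrt : Measurable invSqrt := by unfold invSqrt; fun_prop

lemma abelKernel_eq {t r : ℝ} (ht : 0 < t) (hr : 0 ≤ r) :
    abelKernel t r = 1 / (2 * √2 * π) * (1 / √(cosh t - cosh r)) := by
  unfold abelKernel
  split_ifs with h
  · rfl
  · have : cosh t ≤ cosh r := by
      rw [cosh_le_cosh, abs_of_pos ht, abs_of_nonneg hr]; exact not_lt.1 h
    rw [sqrt_eq_zero_of_nonpos (sub_nonpos.2 this)]; simp

lemma lintegral_abelKernel_mul_eq (z z' : ℍ) {t t' : ℝ} (ht : 0 < t) (ht' : 0 < t') :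
    ∫⁻ x, ENNReal.ofReal (abelKernel t (dist z x) * abelKernel t' (dist z' x)) ∂hypVolume =
      ENNReal.ofReal (1 / (8 * π ^ 2)) * ∫⁻ x, invSqrt (cosh t - cosh (dist z x)) *
        invSqrt (cosh t' - cosh (dist z' x)) ∂hypVolume := by
  rw [← lintegral_const_mul' _ _ ENNReal.ofReal_ne_top]
  refine lintegral_congr fun x => ?_
  rw [abelKernel_eq ht dist_nonneg, abelKernel_eq ht' dist_nonneg, invSqrt, invSqrt,
    ← ENNReal.ofReal_mul (by positivity), ← ENNReal.ofReal_mul (by positivity)]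
  congr 1
  have : (√2 : ℝ) ^ 2 = 2 := sq_sqrt (by norm_num)
  have e : 1 / (8 * π ^ 2) = (1 / (2 * √2 * π)) ^ 2 := by
    rw [div_pow, mul_pow, mul_pow, this]; norm_num
  rw [e]; ring

lemma lintegral_abelKernel_mul_eq_of_ne {z z' : ℍ} (hz : z ≠ z') {t t' : ℝ} (ht : 0 < t)
    (ht' : 0 < t') :
    ∫⁻ x, ENNReal.ofReal (abelKernel t (dist z x) * abelKernel t' (dist z' x)) ∂hypVolume =
      ENNReal.ofReal (1 / (4 * π ^ 2)) * ∫⁻ r in Set.Ioi 0, ENNReal.ofReal (sinh r) *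
        (invSqrt (cosh t - cosh r) * ∫⁻ v, invSqrt (cosh t' - v) *
          ENNReal.ofReal (1 / √((v - cosh (r - dist z z')) * (cosh (r + dist z z') - v)))) := by
  have hm : Measurable fun q : ℝ × ℝ => invSqrt (cosh t - q.1) * invSqrt (cosh t' - q.2) :=
    (measurable_invSqrt.comp (by fun_prop)).mul (measurable_invSqrt.comp (by fun_prop))
  rw [lintegral_abelKernel_mul_eq z z' ht ht', lintegral_hypVolume_cosh_dist hz hm, ← mul_assoc,
    lintegral_Ioi_one_eq_cosh]
  congr 1
  · rw [← ENNReal.ofReal_ofNat 2, ← ENNReal.ofReal_mul (by positivity)]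
    congr 1; field_simp; norm_num
  · refine lintegral_congr fun r => ?_
    congr 1
    rw [← lintegral_const_mul' (invSqrt (cosh t - cosh r)) _ ENNReal.ofReal_ne_top]
    refine lintegral_congr fun v => ?_
    rw [gramDet_cosh]
    ring

lemma lintegral_abelKernel_mul_self_eq (z : ℍ) {t t' : ℝ} (ht : 0 < t) (ht' : 0 < t') :
    ∫⁻ x, ENNReal.ofReal (abelKernel t (dist z x) * abelKernel t' (dist z x)) ∂hypVolume =
      ENNReal.ofReal (1 / (4 * π)) * ∫⁻ r in Set.Ioi 0, ENNReal.ofReal (sinh r) *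
        (invSqrt (cosh t - cosh r) * invSqrt (cosh t' - cosh r)) := by
  have hm : Measurable fun q : ℝ × ℝ => invSqrt (cosh t - q.1) * invSqrt (cosh t' - q.1) :=
    (measurable_invSqrt.comp (by fun_prop)).mul (measurable_invSqrt.comp (by fun_prop))
  have hne : z ≠ (1 : ℝ) +ᵥ z := by
    intro h
    have := congrArg UpperHalfPlane.re h
    simp at this
  have hm2 : Measurable fun r => ENNReal.ofReal (sinh r) *
      (invSqrt (cosh t - cosh r) * invSqrt (cosh t' - cosh r)) := by
    have := measurable_invSqrt
    fun_prop
  rw [lintegral_abelKernel_mul_eq z z ht ht', lintegral_hypVolume_cosh_dist hne hm, ← mul_assoc,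
    lintegral_Ioi_one_eq_cosh]
  rw [show (1 / (4 * π)) = 1 / (8 * π ^ 2) * 2 * π by field_simp; norm_num,
    ENNReal.ofReal_mul (by positivity), ENNReal.ofReal_mul (by positivity), ENNReal.ofReal_ofNat,
    mul_assoc _ (ENNReal.ofReal π), ← lintegral_const_mul _ hm2]
  congr 1
  refine setLIntegral_congr_fun measurableSet_Ioi fun r (hr : 0 < r) => ?_
  simp only
  rw [lintegral_mul_const' (invSqrt (cosh t - cosh r) * invSqrt (cosh t' - cosh r)) _
      (ENNReal.mul_ne_top ENNReal.ofReal_ne_top ENNReal.ofReal_ne_top),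
    lintegral_gramDet hr (dist_pos.2 hne)]
  ring

/-- Reduction of the convolution to a one-dimensional integral over the geodesic radius. -/
lemma lintegral_abelKernel_mul_le (z z' : ℍ) {t t' : ℝ} (ht : 0 < t) (ht' : 0 < t') :
    ∫⁻ x, ENNReal.ofReal (abelKernel t (dist z x) * abelKernel t' (dist z' x)) ∂hypVolume ≤
      ENNReal.ofReal (1 / (4 * π)) * ∫⁻ r in Set.Ioi 0, ENNReal.ofReal
        (sinh r * (1 / √(cosh t - cosh r)) * (1 / √√((max (cosh t') (cosh (r + dist z z')) -
          cosh (r - dist z z')) * |cosh t' - cosh (r + dist z z')|))) := by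
  have hs : ∀ r ∈ Set.Ioi (0 : ℝ), 0 ≤ sinh r := fun r hr => (sinh_pos_iff.2 hr).le
  rcases eq_or_ne z z' with rfl | hz
  · rw [lintegral_abelKernel_mul_self_eq z ht ht']
    refine mul_le_mul_right (setLIntegral_mono' measurableSet_Ioi fun r hr => ?_) _
    rw [invSqrt, invSqrt, ← mul_assoc, ← ENNReal.ofReal_mul (hs r hr),
      ← ENNReal.ofReal_mul (mul_nonneg (hs r hr) (by positivity))]
    refine ENNReal.ofReal_le_ofReal (mul_le_mul_of_nonneg_left ?_
      (mul_nonneg (hs r hr) (by positivity)))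
    rw [dist_self, add_zero, sub_zero]
    rcases le_total (cosh t') (cosh r) with h | h
    · rw [sqrt_eq_zero_of_nonpos (sub_nonpos.2 h), div_zero]; positivity
    · rw [max_eq_left h, abs_of_nonneg (by linarith), sqrt_mul_self (by linarith)]
  · rw [lintegral_abelKernel_mul_eq_of_ne hz ht ht']
    have hD := dist_pos.2 hz
    set D := dist z z'
    rw [show 1 / (4 * π) = 1 / (4 * π ^ 2) * π by field_simp,
      ENNReal.ofReal_mul (by positivity), mul_assoc,
      ← lintegral_const_mul' (ENNReal.ofReal π) _ ENNReal.ofReal_ne_top]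
    refine mul_le_mul_right (lintegral_mono_ae ?_) _
    rw [ae_restrict_iff' measurableSet_Ioi]
    filter_upwards [(Set.countable_singleton (t' - D)).ae_notMem volume] with r hr hr0
    have hne : cosh t' ≠ cosh (r + D) := by
      intro h
      have h1 : 0 < r := hr0
      have := cosh_strictMonoOn.injOn (Set.mem_Ici.2 ht'.le) (Set.mem_Ici.2 (by linarith)) h
      exact hr (by simp; linarith)
    calc _ ≤ ENNReal.ofReal (sinh r) * (invSqrt (cosh t - cosh r) * ENNReal.ofReal
          (π / √√((max (cosh t') (cosh (r + D)) - cosh (r - D)) * |cosh t' - cosh (r + D)|))) := by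
          gcongr
          exact lintegral_elliptic_le' (cosh_sub_lt_cosh_add hr0 hD) hne
      _ = _ := by
          rw [invSqrt, ← mul_assoc, ← ENNReal.ofReal_mul (hs r hr0),
            ← ENNReal.ofReal_mul (mul_nonneg (hs r hr0) (by positivity)),
            ← ENNReal.ofReal_mul (by positivity)]
          congr 1; ring

lemma sinh_mul_exp_sub_one_le {r x : ℝ} : sinh r * (exp x - 1) ≤ cosh (r + x) - cosh r := by
  rw [← cosh_add_sinh x, cosh_add]
  have h1 := mul_nonneg (sub_nonneg.2 (sinh_lt_cosh r).le) (sub_nonneg.2 (one_le_cosh x))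
  linarith

lemma two_mul_sinh_mul_sinh_le {r s : ℝ} (hr : 0 ≤ r) (hs : 0 ≤ s) :
    2 * (sinh r * sinh s) ≤ sinh (r + s) := by
  rw [sinh_add]
  have h1 := mul_le_mul_of_nonneg_left (sinh_lt_cosh s).le (sinh_nonneg_iff.2 hr)
  have h2 := mul_le_mul_of_nonneg_right (sinh_lt_cosh r).le (sinh_nonneg_iff.2 hs)
  linarith

lemma sinh_mul_le_abs_cosh_sub_cosh {s t : ℝ} (hs : 0 < s) (ht : 0 < t) :
    sinh s * ((exp |s - t| - 1) / (exp |s - t| + 1)) ≤ |cosh t - cosh s| := by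
  rcases le_total s t with h | h
  · obtain ⟨y, rfl⟩ : ∃ y, t = s + y := ⟨t - s, by ring⟩
    have hy : 0 ≤ y := by linarith
    rw [show s - (s + y) = -y by ring, abs_neg, abs_of_nonneg hy]
    refine le_trans ?_ (le_abs_self _)
    refine le_trans ?_ sinh_mul_exp_sub_one_le
    have h0 : 0 ≤ exp y - 1 := sub_nonneg.2 (one_le_exp hy)
    exact mul_le_mul_of_nonneg_left (div_le_self h0 (by linarith [exp_pos y]))
      (sinh_pos_iff.2 hs).le
  · obtain ⟨y, rfl⟩ : ∃ y, s = t + y := ⟨s - t, by ring⟩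
    have hy : 0 ≤ y := by linarith
    rw [show t + y - t = y by ring, abs_of_nonneg hy, abs_sub_comm]
    refine le_trans ?_ (le_abs_self _)
    rw [mul_div_assoc', div_le_iff₀ (by positivity), ← cosh_add_sinh y, sinh_add, cosh_add]
    have h1 : 0 ≤ sinh t * (cosh y + sinh y - 1) := mul_nonneg (sinh_pos_iff.2 ht).le
      (by linarith [one_le_cosh y, sinh_nonneg_iff.2 hy])
    linear_combination h1 - (cosh t - sinh t) * cosh_sq y

lemma lintegral_Iio_exp_sub_one_rpow_le {p : ℝ} (hp0 : 0 < p) (hp1 : p < 1) (c : ℝ) :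
    ∫⁻ r in Set.Iio c, ENNReal.ofReal ((exp (c - r) - 1) ^ (-p)) ≤
      ENNReal.ofReal (1 / (p * (1 - p))) := by
  refine le_trans (le_of_eq ?_) (lintegral_exp_sub_one_rpow_le hp0 hp1)
  rw [← lintegral_indicator measurableSet_Iio, ← lintegral_indicator measurableSet_Ioi,
    ← lintegral_sub_left_eq_self _ c]
  refine lintegral_congr fun r => ?_
  simp [Set.indicator]

lemma lintegral_Ioi_exp_sub_one_rpow_le {p : ℝ} (hp0 : 0 < p) (hp1 : p < 1) (c : ℝ) :
    ∫⁻ r in Set.Ioi c, ENNReal.ofReal ((exp (r - c) - 1) ^ (-p)) ≤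
      ENNReal.ofReal (1 / (p * (1 - p))) := by
  refine le_trans (le_of_eq ?_) (lintegral_exp_sub_one_rpow_le hp0 hp1)
  rw [← lintegral_indicator measurableSet_Ioi, ← lintegral_indicator measurableSet_Ioi,
    ← lintegral_sub_right_eq_self ((Set.Ioi (0 : ℝ)).indicator _) c]
  refine lintegral_congr fun r => ?_
  simp [Set.indicator]

lemma lintegral_exp_abs_sub_one_rpow_le {p : ℝ} (hp0 : 0 < p) (hp1 : p < 1) (c : ℝ) :
    ∫⁻ r, ENNReal.ofReal ((exp |r - c| - 1) ^ (-p)) ≤ ENNReal.ofReal (2 / (p * (1 - p))) := by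
  have hq : 0 < 1 - p := by linarith
  rw [← lintegral_add_compl _ (measurableSet_Ioi (a := c)), Set.compl_Ioi,
    setLIntegral_congr Iio_ae_eq_Iic.symm,
    show 2 / (p * (1 - p)) = 1 / (p * (1 - p)) + 1 / (p * (1 - p)) by ring,
    ENNReal.ofReal_add (by positivity) (by positivity)]
  refine add_le_add (le_trans (le_of_eq ?_) (lintegral_Ioi_exp_sub_one_rpow_le hp0 hp1 c))
    (le_trans (le_of_eq ?_) (lintegral_Iio_exp_sub_one_rpow_le hp0 hp1 c))
  · refine setLIntegral_congr_fun measurableSet_Ioi fun r (hr : c < r) => ?_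
    rw [abs_of_pos (sub_pos.2 hr)]
  · refine setLIntegral_congr_fun measurableSet_Iio fun r (hr : r < c) => ?_
    rw [abs_sub_comm, abs_of_pos (sub_pos.2 hr)]

/-- The radial integrand when the distance dominates: `P`, `M`, `N` are bounded below by
products of `s = sinh r` and `d = sinh D`. -/
lemma radial_le_of_dist {s d P M N X Y : ℝ} (hs : 0 < s) (hd : 0 < d) (hX : 0 < X) (hY : 0 < Y)
    (hP : s * X ≤ P) (hM : 2 * (s * d) ≤ M) (hN : 2 * (s * d) * (Y / (Y + 2)) ≤ N) :
    s * (1 / √P) * (1 / √√(M * N)) ≤ 1 / √(2 * d) *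
      (X ^ (-(1 / 2) : ℝ) + 4 / 5 * X ^ (-(3 / 4) : ℝ) + 2 / 5 * Y ^ (-(3 / 4) : ℝ)) := by
  set q := Y / (Y + 2) with hq
  have hq0 : 0 < q := by positivity
  set a := X ^ (-(1 / 4) : ℝ) with ha
  set b := Y ^ (-(1 / 4) : ℝ) with hb
  have ha0 : 0 < a := rpow_pos_of_pos hX _
  have hb0 : 0 < b := rpow_pos_of_pos hY _
  have ha2 : X ^ (-(1 / 2) : ℝ) = a ^ 2 := by
    rw [ha, ← rpow_natCast, ← rpow_mul hX.le]; norm_num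
  have ha3 : X ^ (-(3 / 4) : ℝ) = a ^ 3 := by
    rw [ha, ← rpow_natCast, ← rpow_mul hX.le]; norm_num
  have hb3 : Y ^ (-(3 / 4) : ℝ) = b ^ 3 := by
    rw [hb, ← rpow_natCast, ← rpow_mul hY.le]; norm_num
  have hb4 : b ^ 4 * Y = 1 := by
    rw [hb, ← rpow_natCast, ← rpow_mul hY.le]; norm_num
    rw [rpow_neg_one, inv_mul_cancel₀ hY.ne']
  have ha4 : a ^ 2 * √X = 1 := by
    rw [← ha2, sqrt_eq_rpow, ← rpow_add hX]; norm_num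
  have hqb : 1 ≤ √√q * (1 + 6 / 5 * b) := by
    have h4 : (√√q) ^ 4 = q := by
      rw [show (√√q) ^ 4 = ((√√q) ^ 2) ^ 2 by ring, sq_sqrt (sqrt_nonneg _), sq_sqrt hq0.le]
    have h1 : 1 ≤ (√√q * (1 + 6 / 5 * b)) ^ 4 := by
      rw [mul_pow, h4]
      have h5 : 1 = q * (1 + 2 * b ^ 4) := by
        have : 2 * b ^ 4 = 2 / Y := by field_simp; linarith
        rw [this, hq]; field_simp
      calc (1 : ℝ) = q * (1 + 2 * b ^ 4) := h5
        _ ≤ _ := by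
          refine mul_le_mul_of_nonneg_left ?_ hq0.le
          have : (1 + 6 / 5 * b) ^ 4 = 1 + 2 * b ^ 4 +
            (24 / 5 * b + 216 / 25 * b ^ 2 + 864 / 125 * b ^ 3 + 46 / 625 * b ^ 4) := by ring
          rw [this]
          have : 0 < 24 / 5 * b + 216 / 25 * b ^ 2 + 864 / 125 * b ^ 3 + 46 / 625 * b ^ 4 := by
            positivity
          linarith
    by_contra h
    exact absurd h1 (not_le.2 (pow_lt_one₀ (by positivity) (not_le.1 h) (by norm_num)))
  have hP' : √s * √X ≤ √P := by
    rw [← sqrt_mul hs.le]; exact sqrt_le_sqrt hP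
  have hMN : √s * √(2 * d) * √√q ≤ √√(M * N) := by
    have : √s * √(2 * d) * √√q = √√((2 * (s * d)) * (2 * (s * d) * q)) := by
      rw [← mul_assoc, sqrt_mul (mul_self_nonneg _) q, sqrt_mul_self (by positivity),
        sqrt_mul (by positivity) (√q), ← sqrt_mul hs.le]
      congr 2; ring
    rw [this]
    exact sqrt_le_sqrt (sqrt_le_sqrt (mul_le_mul hM hN (by positivity)
      (le_trans (by positivity) hM)))
  have hss : √s * √s = s := mul_self_sqrt hs.le
  have hX' : 0 < √X := sqrt_pos.2 hX
  have hd' : 0 < √(2 * d) := sqrt_pos.2 (by positivity)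
  have hs' : 0 < √s := sqrt_pos.2 hs
  have hq' : 0 < √√q := sqrt_pos.2 (sqrt_pos.2 hq0)
  calc s * (1 / √P) * (1 / √√(M * N))
      ≤ s * (1 / (√s * √X)) * (1 / (√s * √(2 * d) * √√q)) := by gcongr
    _ = 1 / √(2 * d) * (1 / √X) * (1 / √√q) := by
        rw [show s * (1 / (√s * √X)) * (1 / (√s * √(2 * d) * √√q)) =
          s / (√s * √s) * (1 / √(2 * d) * (1 / √X) * (1 / √√q)) by field_simp, hss,
          div_self hs.ne', one_mul]
    _ ≤ 1 / √(2 * d) * a ^ 2 * (1 + 6 / 5 * b) := by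
        rw [show a ^ 2 = 1 / √X by rw [eq_div_iff hX'.ne', ha4]]
        refine mul_le_mul_of_nonneg_left ?_ (by positivity)
        rw [div_le_iff₀ hq']; linarith
    _ ≤ _ := by
        rw [ha2, ha3, hb3, mul_assoc]
        refine mul_le_mul_of_nonneg_left ?_ (by positivity)
        nlinarith [mul_nonneg (sq_nonneg (a - b)) (by linarith : 0 ≤ 2 * a + b)]

lemma radial_le_of_time {s d P M N X : ℝ} (hs : 0 < s) (hd : 0 < d) (hX : 0 < X)
    (hP : s * X ≤ P) (hM : s * d ≤ M) (hN : s * d * X ≤ N) :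
    s * (1 / √P) * (1 / √√(M * N)) ≤ 1 / √d * X ^ (-(3 / 4) : ℝ) := by
  have hP' : √s * √X ≤ √P := by
    rw [← sqrt_mul hs.le]; exact sqrt_le_sqrt hP
  have hMN : √s * √d * √√X ≤ √√(M * N) := by
    have : √s * √d * √√X = √√((s * d) * (s * d * X)) := by
      rw [← mul_assoc, sqrt_mul (by positivity), sqrt_mul_self (by positivity),
        sqrt_mul (by positivity), ← sqrt_mul hs.le]
    rw [this]
    exact sqrt_le_sqrt (sqrt_le_sqrt (mul_le_mul hM hN (by positivity)
      (le_trans (by positivity) hM)))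
  have hss : √s * √s = s := mul_self_sqrt hs.le
  have hX' : 0 < √X := sqrt_pos.2 hX
  have hX'' : 0 < √√X := sqrt_pos.2 hX'
  have hd' : 0 < √d := sqrt_pos.2 hd
  have hs' : 0 < √s := sqrt_pos.2 hs
  calc s * (1 / √P) * (1 / √√(M * N))
      ≤ s * (1 / (√s * √X)) * (1 / (√s * √d * √√X)) := by gcongr
    _ = 1 / √d * (1 / (√X * √√X)) := by
        rw [show s * (1 / (√s * √X)) * (1 / (√s * √d * √√X)) =
          s / (√s * √s) * (1 / √d * (1 / (√X * √√X))) by field_simp, hss,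
          div_self hs.ne', one_mul]
    _ = _ := by
        congr 1
        rw [sqrt_eq_rpow (√X), sqrt_eq_rpow, ← rpow_mul hX.le, ← rpow_add hX, one_div,
          ← rpow_neg hX.le]
        norm_num

lemma lintegral_Ioi_le_lintegral_Iio {t : ℝ} {F G : ℝ → ℝ≥0∞}
    (hFG : ∀ᵐ r : ℝ, 0 < r → r < t → F r ≤ G r) (hF : ∀ r, t ≤ r → F r = 0) :
    ∫⁻ r in Set.Ioi 0, F r ≤ ∫⁻ r in Set.Iio t, G r := by
  rw [← lintegral_indicator measurableSet_Iio, ← lintegral_indicator measurableSet_Ioi]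
  refine lintegral_mono_ae ?_
  filter_upwards [hFG] with r hr
  rw [Set.indicator_apply, Set.indicator_apply]
  split_ifs with h1 h2 h2
  · exact hr h1 h2
  · exact (hF r (not_lt.1 h2)).le
  · exact zero_le
  · exact le_rfl

lemma lintegral_abelKernel_mul_le_of_ne {z z' : ℍ} (hz : z ≠ z') {t t' : ℝ} (ht : 0 < t)
    (ht' : 0 < t') :
    ∫⁻ x, ENNReal.ofReal (abelKernel t (dist z x) * abelKernel t' (dist z' x)) ∂hypVolume ≤
      ENNReal.ofReal (1 / √(sinh (dist z z'))) := by
  refine (lintegral_abelKernel_mul_le z z' ht ht').trans ?_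
  have hD := dist_pos.2 hz
  set D := dist z z'
  have hd : 0 < sinh D := sinh_pos_iff.2 hD
  have hmeas : Measurable fun r : ℝ => ENNReal.ofReal ((exp (t - r) - 1) ^ (-(1 / 2) : ℝ)) := by
    fun_prop
  have hmeas' : Measurable fun r : ℝ =>
      ENNReal.ofReal (4 / 5) * ENNReal.ofReal ((exp (t - r) - 1) ^ (-(3 / 4) : ℝ)) := by
    fun_prop
  calc _ ≤ ENNReal.ofReal (1 / (4 * π)) * ∫⁻ r in Set.Iio t, ENNReal.ofReal (1 / √(2 * sinh D)) *
        (ENNReal.ofReal ((exp (t - r) - 1) ^ (-(1 / 2) : ℝ)) +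
        ENNReal.ofReal (4 / 5) * ENNReal.ofReal ((exp (t - r) - 1) ^ (-(3 / 4) : ℝ)) +
        ENNReal.ofReal (2 / 5) *
          ENNReal.ofReal ((exp |r - (t' - D)| - 1) ^ (-(3 / 4) : ℝ))) := by
        refine mul_le_mul_right (lintegral_Ioi_le_lintegral_Iio ?_ fun r hr => ?_) _
        · filter_upwards [(Set.countable_singleton (t' - D)).ae_notMem volume] with r hr hr0 hrt
          have hs : 0 < sinh r := sinh_pos_iff.2 hr0
          have hX : 0 < exp (t - r) - 1 := sub_pos.2 (one_lt_exp_iff.2 (by linarith))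
          have hY : 0 < exp |r - (t' - D)| - 1 :=
            sub_pos.2 (one_lt_exp_iff.2 (abs_pos.2 (sub_ne_zero.2 hr)))
          rw [← ENNReal.ofReal_mul (by norm_num), ← ENNReal.ofReal_mul (by norm_num),
            ← ENNReal.ofReal_add (by positivity) (by positivity),
            ← ENNReal.ofReal_add (by positivity) (by positivity),
            ← ENNReal.ofReal_mul (by positivity)]
          have h2 := two_mul_sinh_mul_sinh_le hr0.le hD.le
          refine ENNReal.ofReal_le_ofReal ((radial_le_of_dist hs hd hX hY ?_ ?_ ?_).trans_eq ?_)
          · have := @sinh_mul_exp_sub_one_le r (t - r)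
            rwa [add_sub_cancel] at this
          · refine le_trans ?_ (sub_le_sub_right (le_max_right _ _) _)
            rw [cosh_add, cosh_sub]; linarith
          · refine le_trans ?_ (sinh_mul_le_abs_cosh_sub_cosh (by linarith) ht')
            rw [show r + D - t' = r - (t' - D) by ring, show exp |r - (t' - D)| - 1 + 2 =
              exp |r - (t' - D)| + 1 by ring]
            exact mul_le_mul_of_nonneg_right h2 (by positivity)
          · ring
        · have : cosh t ≤ cosh r := cosh_le_cosh.2 (by
            rwa [abs_of_pos ht, abs_of_pos (ht.trans_le hr)])
          rw [sqrt_eq_zero_of_nonpos (sub_nonpos.2 this)]; simp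
    _ ≤ ENNReal.ofReal (1 / (4 * π)) * (ENNReal.ofReal (1 / √(2 * sinh D)) *
        (ENNReal.ofReal (1 / ((1 / 2) * (1 - 1 / 2))) +
        ENNReal.ofReal (4 / 5) * ENNReal.ofReal (1 / ((3 / 4) * (1 - 3 / 4))) +
        ENNReal.ofReal (2 / 5) * ENNReal.ofReal (2 / ((3 / 4) * (1 - 3 / 4))))) := by
        rw [lintegral_const_mul' _ _ ENNReal.ofReal_ne_top,
          lintegral_add_left (by exact hmeas.add hmeas'), lintegral_add_left hmeas,
          lintegral_const_mul' (ENNReal.ofReal (4 / 5)) _ ENNReal.ofReal_ne_top,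
          lintegral_const_mul' (ENNReal.ofReal (2 / 5)) _ ENNReal.ofReal_ne_top]
        gcongr
        · exact lintegral_Iio_exp_sub_one_rpow_le (by norm_num) (by norm_num) t
        · exact lintegral_Iio_exp_sub_one_rpow_le (by norm_num) (by norm_num) t
        · exact (setLIntegral_le_lintegral _ _).trans
            (lintegral_exp_abs_sub_one_rpow_le (by norm_num) (by norm_num) (t' - D))
    _ ≤ _ := by
        rw [← ENNReal.ofReal_mul (by norm_num), ← ENNReal.ofReal_mul (by norm_num),
            ← ENNReal.ofReal_add (by norm_num) (by norm_num),
            ← ENNReal.ofReal_add (by norm_num) (by norm_num),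
            ← ENNReal.ofReal_mul (by positivity), ← ENNReal.ofReal_mul (by positivity)]
        refine ENNReal.ofReal_le_ofReal ?_
        have hd' : 0 < √(sinh D) := sqrt_pos.2 hd
        have h2 : (7 / 5 : ℝ) ≤ √2 := le_sqrt_of_sq_le (by norm_num)
        have hpi := pi_gt_three
        rw [sqrt_mul (by norm_num), div_mul_eq_mul_div, one_mul, div_mul_eq_mul_div, div_div,
          div_le_div_iff₀ (by positivity) hd']
        have : 3 * (7 / 5) ≤ π * √2 := mul_le_mul hpi.le h2 (by norm_num) pi_pos.le
        nlinarith

lemma lintegral_abelKernel_mul_le_of_lt (z z' : ℍ) {t t' : ℝ} (ht : 0 < t)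
    (htt' : t < t') (hz : dist z z' ≤ t' - t) :
    ∫⁻ x, ENNReal.ofReal (abelKernel t (dist z x) * abelKernel t' (dist z' x)) ∂hypVolume ≤
      ENNReal.ofReal (1 / √(sinh (t' - t))) := by
  refine (lintegral_abelKernel_mul_le z z' ht (ht.trans htt')).trans ?_
  have hD : 0 ≤ dist z z' := dist_nonneg
  set D := dist z z'
  obtain ⟨m, rfl⟩ : ∃ m, t' = t + m := ⟨t' - t, by ring⟩
  rw [add_sub_cancel_left] at hz ⊢
  have hm : 0 < m := by linarith
  have hd : 0 < sinh m := sinh_pos_iff.2 hm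
  calc _ ≤ ENNReal.ofReal (1 / (4 * π)) * ∫⁻ r in Set.Iio t, ENNReal.ofReal (1 / √(sinh m)) *
        ENNReal.ofReal ((exp (t - r) - 1) ^ (-(3 / 4) : ℝ)) := by
        refine mul_le_mul_right (lintegral_Ioi_le_lintegral_Iio ?_ fun r hr => ?_) _
        · refine Filter.Eventually.of_forall fun r hr0 hrt => ?_
          have hs : 0 < sinh r := sinh_pos_iff.2 hr0
          have hX : 0 < exp (t - r) - 1 := sub_pos.2 (one_lt_exp_iff.2 (by linarith))
          rw [← ENNReal.ofReal_mul (by positivity)]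
          refine ENNReal.ofReal_le_ofReal (radial_le_of_time hs hd hX ?_ ?_ ?_)
          · have := @sinh_mul_exp_sub_one_le r (t - r)
            rwa [add_sub_cancel] at this
          · refine le_trans ?_ (sub_le_sub_right (le_max_left _ _) _)
            have h1 : cosh (r + m) ≤ cosh (t + m) := cosh_le_cosh.2 (by
              rw [abs_of_pos (by linarith), abs_of_pos (by linarith)]; linarith)
            have h2 : cosh (r - D) ≤ max (cosh r) (cosh m) := by
              rw [le_max_iff, cosh_le_cosh, cosh_le_cosh, abs_of_pos hr0, abs_of_pos hm, abs_le,
                abs_le]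
              rcases le_total D r with h | h
              · exact Or.inl ⟨by linarith, by linarith⟩
              · exact Or.inr ⟨by linarith, by linarith⟩
            have h3 : sinh r * sinh m ≤ cosh (r + m) - cosh r := by
              rw [cosh_add]
              have := mul_le_mul_of_nonneg_left (one_le_cosh m) (cosh_pos r).le
              linarith
            have h4 : sinh r * sinh m ≤ cosh (r + m) - cosh m := by
              rw [cosh_add]
              have := mul_le_mul_of_nonneg_right (one_le_cosh r) (cosh_pos m).le
              linarith
            rcases le_max_iff.1 h2 with h | h <;> linarith
          · refine le_trans ?_ (le_abs_self _)
            have h1 : cosh (r + D) ≤ cosh (r + m) := cosh_le_cosh.2 (by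
              rw [abs_of_pos (by linarith), abs_of_pos (by linarith)]; linarith)
            have h2 := @sinh_mul_exp_sub_one_le (r + m) (t - r)
            rw [show r + m + (t - r) = t + m by ring] at h2
            have h3 := mul_le_mul_of_nonneg_right (two_mul_sinh_mul_sinh_le hr0.le hm.le) hX.le
            have h4 : 0 < sinh r * sinh m * (exp (t - r) - 1) := by positivity
            linarith
        · have : cosh t ≤ cosh r := cosh_le_cosh.2 (by
            rwa [abs_of_pos ht, abs_of_pos (ht.trans_le hr)])
          rw [sqrt_eq_zero_of_nonpos (sub_nonpos.2 this)]; simp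
    _ ≤ ENNReal.ofReal (1 / (4 * π)) * (ENNReal.ofReal (1 / √(sinh m)) *
          ENNReal.ofReal (1 / ((3 / 4) * (1 - 3 / 4)))) := by
        rw [lintegral_const_mul' _ _ ENNReal.ofReal_ne_top]
        gcongr
        exact lintegral_Iio_exp_sub_one_rpow_le (by norm_num) (by norm_num) t
    _ ≤ _ := by
        rw [← ENNReal.ofReal_mul (by positivity), ← ENNReal.ofReal_mul (by positivity)]
        refine ENNReal.ofReal_le_ofReal ?_
        have hd' : 0 < √(sinh m) := sqrt_pos.2 hd
        have hpi := pi_gt_three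
        rw [div_mul_eq_mul_div, one_mul, div_mul_eq_mul_div, div_div,
          div_le_div_iff₀ (by positivity) hd']
        nlinarith

/-- The square of the Abel kernel is not integrable. -/
lemma lintegral_abelKernel_mul_self_eq_top (z : ℍ) {t : ℝ} (ht : 0 < t) :
    ∫⁻ x, ENNReal.ofReal (abelKernel t (dist z x) * abelKernel t (dist z x)) ∂hypVolume = ∞ := by
  rw [lintegral_abelKernel_mul_self_eq z ht ht,
    ← lintegral_Ioi_one_eq_cosh fun u => invSqrt (cosh t - u) * invSqrt (cosh t - u)]
  have hT : 1 < cosh t := one_lt_cosh.2 ht.ne'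
  refine ENNReal.mul_eq_top.2 (Or.inl ⟨(ENNReal.ofReal_pos.2 (by positivity)).ne', ?_⟩)
  by_contra hfin
  have hint : IntegrableOn (fun u => (u - cosh t)⁻¹) (Set.Ioc 1 (cosh t)) := by
    refine ⟨by fun_prop, (hasFiniteIntegral_iff_norm _).2 (lt_of_le_of_lt ?_
      (lt_top_iff_ne_top.2 hfin))⟩
    refine le_trans (le_of_eq ?_) (lintegral_mono_set
      (show Set.Ioc 1 (cosh t) ⊆ Set.Ioi 1 from Set.Ioc_subset_Ioi_self))
    refine setLIntegral_congr_fun measurableSet_Ioc fun u hu => ?_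
    have : 0 ≤ cosh t - u := sub_nonneg.2 hu.2
    rw [invSqrt, ← ENNReal.ofReal_mul (by positivity), norm_inv, norm_sub_rev, Real.norm_eq_abs,
      abs_of_nonneg this]
    congr 1
    rw [div_mul_div_comm, mul_self_sqrt this]; simp
  have := intervalIntegrable_sub_inv_iff.1
    ((intervalIntegrable_iff_integrableOn_Ioc_of_le hT.le).2 hint)
  rcases this with h | h
  · exact hT.ne h
  · exact h Set.right_mem_uIcc

lemma abelKernel_nonneg (t r : ℝ) : 0 ≤ abelKernel t r := by
  unfold abelKernel
  split_ifs <;> positivity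

lemma integral_abelKernel_mul_le_of_lintegral_le {z z' : ℍ} {t t' C : ℝ} (hC : 0 ≤ C)
    (h : ∫⁻ x, ENNReal.ofReal (abelKernel t (dist z x) * abelKernel t' (dist z' x)) ∂hypVolume ≤
      ENNReal.ofReal C) :
    ∫ x, abelKernel t (dist z x) * abelKernel t' (dist z' x) ∂hypVolume ≤ C := by
  refine (Real.le_norm_self _).trans ((norm_integral_le_lintegral_norm _).trans ?_)
  refine ENNReal.toReal_le_of_le_ofReal hC (le_trans (le_of_eq (lintegral_congr fun x => ?_)) h)
  rw [Real.norm_of_nonneg (mul_nonneg (abelKernel_nonneg _ _) (abelKernel_nonneg _ _))]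

/-- Bound on the convolution of two Abel wave kernels: for `z, z' ∈ ℍ` and `t, t' > 0`,
`∫_ℍ A(t,d(z,x)) A(t',d(z',x)) dx ≤ 1_{[0,t+t']}(d(z,z')) / √(sinh(max(|t-t'|, d(z,z'))))`. -/
theorem abelKernel_convolution_bound (z z' : UpperHalfPlane) (t t' : ℝ)
    (ht : 0 < t) (ht' : 0 < t') :
    ∫ x, abelKernel t (dist z x) * abelKernel t' (dist z' x) ∂hypVolume
      ≤ if dist z z' ≤ t + t' then
          1 / Real.sqrt (Real.sinh (max |t - t'| (dist z z'))) else 0 := by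
  split_ifs with hle
  · rcases le_or_gt |t - t'| (dist z z') with hm | hm
    · rw [max_eq_right hm]
      rcases eq_or_ne z z' with rfl | hz
      · obtain rfl : t = t' := by
          rw [dist_self] at hm
          exact sub_eq_zero.1 (abs_nonpos_iff.1 hm)
        rw [integral_undef]
        · positivity
        · intro hint
          have := (hasFiniteIntegral_iff_norm _).1 hint.2
          refine this.ne ((lintegral_congr fun x => ?_).trans
            (lintegral_abelKernel_mul_self_eq_top z ht))
          rw [Real.norm_of_nonneg (mul_self_nonneg _)]
      · exact integral_abelKernel_mul_le_of_lintegral_le (by positivity)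
          (lintegral_abelKernel_mul_le_of_ne hz ht ht')
    · rw [max_eq_left hm.le]
      refine integral_abelKernel_mul_le_of_lintegral_le (by positivity) ?_
      rcases lt_trichotomy t t' with h | rfl | h
      · rw [abs_sub_comm, abs_of_pos (sub_pos.2 h)] at hm ⊢
        exact lintegral_abelKernel_mul_le_of_lt z z' ht h hm.le
      · rw [sub_self, abs_zero] at hm
        exact absurd hm (not_lt.2 dist_nonneg)
      · rw [abs_of_pos (sub_pos.2 h), dist_comm] at hm
        rw [abs_of_pos (sub_pos.2 h)]
        simp only [mul_comm (abelKernel t _)]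
        exact lintegral_abelKernel_mul_le_of_lt z' z ht' h hm.le
  · refine (integral_eq_zero_of_ae (Filter.Eventually.of_forall fun x => ?_)).le
    simp only [abelKernel, Pi.zero_apply]
    by_cases h1 : dist z x < t
    · have h2 : ¬ dist z' x < t' := fun h2 =>
        hle ((dist_triangle_right z z' x).trans (by linarith))
      simp [h2]
    · simp [h1]
end

section
/- Let $z, z' \in \mathbb{H}$ and $t, t' > 0$. Then $\int_{\mathbb{H}} \frac{\mathbf{1}_{[0,t]}(d(x,z))\,\mathbf{1}_{[0,t']}(d(x,z'))}{\sqrt{\sinh(d(x,z))}\,\sqrt{\sinh(d(x,z'))}}\,dx \leq \mathbf{1}_{[0,t+t']}(d(z,z'))\cdot 4\pi\min(t,t')$. -/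
open MeasureTheory UpperHalfPlane Real
open scoped ENNReal

theorem lintegral_hypVolume (f : ℝ × ℝ → ℝ≥0∞) (hf : Measurable f) :
    ∫⁻ x : UpperHalfPlane, f (x.re, x.im) ∂hypVolume =
      ∫⁻ p in {p : ℝ × ℝ | 0 < p.2}, ENNReal.ofReal (1 / p.2 ^ 2) * f p := by
  have hcoe : MeasurableEmbedding UpperHalfPlane.coe := isOpenEmbedding_coe.measurableEmbedding
  have him : Measurable UpperHalfPlane.im := continuous_im.measurable
  have hre : Measurable UpperHalfPlane.re := continuous_re.measurable
  have hs : MeasurableSet {p : ℝ × ℝ | 0 < p.2} := measurableSet_lt measurable_const measurable_snd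
  have hpre : Complex.measurableEquivRealProd ⁻¹' {p : ℝ × ℝ | 0 < p.2} =
      Set.range UpperHalfPlane.coe := by
    ext w; simp [UpperHalfPlane.range_coe]
  rw [hypVolume, lintegral_withDensity_eq_lintegral_mul _ (by fun_prop) (by fun_prop),
    ← Complex.volume_preserving_equiv_real_prod.setLIntegral_comp_preimage_emb
      Complex.measurableEquivRealProd.measurableEmbedding, hpre, ← hcoe.map_comap,
    hcoe.lintegral_map]
  rfl

/-- The map sending the upper half-plane to the hyperboloid based at `a + b * I`, in the two
spatial coordinates. -/
noncomputable def hyperboloidCoord (a b : ℝ) (p : ℝ × ℝ) : ℝ × ℝ :=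
  (((p.1 - a) ^ 2 - b ^ 2) / (2 * b) * p.2⁻¹ + p.2 / (2 * b), (p.1 - a) * p.2⁻¹)

/-- The derivative of `hyperboloidCoord`. -/
noncomputable def fderivHyperboloidCoord (a b : ℝ) (p : ℝ × ℝ) : ℝ × ℝ →L[ℝ] ℝ × ℝ :=
  (Matrix.toLin (.finTwoProd ℝ) (.finTwoProd ℝ)
    !![(p.1 - a) / b * p.2⁻¹, 1 / (2 * b) - ((p.1 - a) ^ 2 - b ^ 2) / (2 * b) * (p.2 ^ 2)⁻¹;
      p.2⁻¹, -((p.1 - a) * (p.2 ^ 2)⁻¹)]).toContinuousLinearMap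

theorem hasFDerivAt_hyperboloidCoord (a b : ℝ) {p : ℝ × ℝ} (hp : p.2 ≠ 0) :
    HasFDerivAt (hyperboloidCoord a b) (fderivHyperboloidCoord a b p) p := by
  unfold fderivHyperboloidCoord
  rw [Matrix.toLin_finTwoProd_toContinuousLinearMap]
  have hx : HasFDerivAt (fun q : ℝ × ℝ => q.1 - a) (ContinuousLinearMap.fst ℝ ℝ ℝ) p :=
    hasFDerivAt_fst.sub_const a
  have hq : HasFDerivAt (fun q : ℝ × ℝ => ((q.1 - a) ^ 2 - b ^ 2) / (2 * b))
      (((p.1 - a) / b) • ContinuousLinearMap.fst ℝ ℝ ℝ) p := by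
    have h : HasDerivAt (fun u : ℝ => (u ^ 2 - b ^ 2) / (2 * b)) ((p.1 - a) / b) (p.1 - a) := by
      refine (((hasDerivAt_pow 2 (p.1 - a)).sub_const (b ^ 2)).div_const (2 * b)).congr_deriv ?_
      simp [mul_div_mul_left]
    exact h.comp_hasFDerivAt p hx
  have hinv : HasFDerivAt (fun q : ℝ × ℝ => q.2⁻¹)
      (-(p.2 ^ 2)⁻¹ • ContinuousLinearMap.snd ℝ ℝ ℝ) p :=
    (hasDerivAt_inv hp).comp_hasFDerivAt p hasFDerivAt_snd
  have hdiv : HasFDerivAt (fun q : ℝ × ℝ => q.2 / (2 * b))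
      ((1 / (2 * b)) • ContinuousLinearMap.snd ℝ ℝ ℝ) p :=
    ((hasDerivAt_id p.2).div_const (2 * b)).comp_hasFDerivAt p hasFDerivAt_snd
  convert! ((hq.mul hinv).add hdiv).prodMk (hx.mul hinv) using 1
  ext <;> simp <;> ring

theorem det_fderivHyperboloidCoord (a b : ℝ) {p : ℝ × ℝ} (hp : p.2 ≠ 0) (hb : b ≠ 0) :
    (fderivHyperboloidCoord a b p).det =
      -(((p.1 - a) ^ 2 + p.2 ^ 2 + b ^ 2) / (2 * b * p.2)) * (1 / p.2 ^ 2) := by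
  unfold fderivHyperboloidCoord
  simp only [LinearMap.det_toContinuousLinearMap, LinearMap.det_toLin, Matrix.det_fin_two_of]
  field_simp
  ring

theorem one_add_sq_hyperboloidCoord (a b : ℝ) {p : ℝ × ℝ} (hp : p.2 ≠ 0) (hb : b ≠ 0) :
    1 + ((hyperboloidCoord a b p).1 ^ 2 + (hyperboloidCoord a b p).2 ^ 2) =
      (((p.1 - a) ^ 2 + p.2 ^ 2 + b ^ 2) / (2 * b * p.2)) ^ 2 := by
  simp only [hyperboloidCoord]
  field_simp
  ring

theorem injOn_hyperboloidCoord (a : ℝ) {b : ℝ} (hb : 0 < b) :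
    Set.InjOn (hyperboloidCoord a b) {p | 0 < p.2} := by
  have key : ∀ p : ℝ × ℝ, 0 < p.2 →
      √(1 + ((hyperboloidCoord a b p).1 ^ 2 + (hyperboloidCoord a b p).2 ^ 2)) -
        (hyperboloidCoord a b p).1 = b * p.2⁻¹ := by
    intro p hp
    rw [one_add_sq_hyperboloidCoord a b hp.ne' hb.ne', Real.sqrt_sq (by positivity)]
    simp only [hyperboloidCoord]
    field_simp
    ring
  intro p hp q hq h
  have h2 : p.2⁻¹ = q.2⁻¹ := by
    refine mul_left_cancel₀ hb.ne' ?_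
    rw [← key p hp, ← key q hq, h]
  have h1 : (p.1 - a) * p.2⁻¹ = (q.1 - a) * q.2⁻¹ := congrArg Prod.snd h
  rw [h2] at h1
  have h3 := mul_right_cancel₀ (inv_ne_zero (ne_of_gt hq)) h1
  exact Prod.ext (by linarith) (inv_injective h2)

theorem cosh_dist_eq (x z : UpperHalfPlane) :
    cosh (dist x z) = ((x.re - z.re) ^ 2 + x.im ^ 2 + z.im ^ 2) / (2 * z.im * x.im) := by
  rw [cosh_dist, Complex.dist_eq, Complex.sq_norm, Complex.normSq_apply]
  have := x.im_ne_zero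
  have := z.im_ne_zero
  simp
  field_simp
  ring

theorem sinh_dist_eq (x z : UpperHalfPlane) :
    sinh (dist x z) = √((hyperboloidCoord z.re z.im (x.re, x.im)).1 ^ 2 +
      (hyperboloidCoord z.re z.im (x.re, x.im)).2 ^ 2) := by
  have h := one_add_sq_hyperboloidCoord z.re z.im (p := (x.re, x.im)) x.im_ne_zero z.im_ne_zero
  rw [← cosh_dist_eq x z, cosh_sq, add_comm, add_left_inj] at h
  rw [h, Real.sqrt_sq (sinh_nonneg_iff.2 dist_nonneg)]

/-- Integration of a radial function over the hyperbolic plane, in the variable `ρ = sinh r`. -/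
theorem lintegral_comp_sinh_dist_le (z : UpperHalfPlane) {h : ℝ → ℝ≥0∞} (hh : Measurable h) :
    ∫⁻ x, h (sinh (dist x z)) ∂hypVolume ≤
      ENNReal.ofReal (2 * π) *
        ∫⁻ ρ in Set.Ioi (0 : ℝ), ENNReal.ofReal ρ * (ENNReal.ofReal (√(1 + ρ ^ 2))⁻¹ * h ρ) := by
  set F := hyperboloidCoord z.re z.im
  set g : ℝ × ℝ → ℝ≥0∞ := fun v =>
    ENNReal.ofReal (√(1 + (v.1 ^ 2 + v.2 ^ 2)))⁻¹ * h √(v.1 ^ 2 + v.2 ^ 2) with hg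
  have hs : MeasurableSet {p : ℝ × ℝ | 0 < p.2} := measurableSet_lt measurable_const measurable_snd
  have hFm : Measurable F := by unfold F hyperboloidCoord; fun_prop
  calc ∫⁻ x, h (sinh (dist x z)) ∂hypVolume
      = ∫⁻ p in {p : ℝ × ℝ | 0 < p.2},
          ENNReal.ofReal (1 / p.2 ^ 2) * h √((F p).1 ^ 2 + (F p).2 ^ 2) := by
        simp_rw [sinh_dist_eq]
        exact lintegral_hypVolume (fun p => h √((F p).1 ^ 2 + (F p).2 ^ 2)) (by fun_prop)
    _ = ∫⁻ p in {p : ℝ × ℝ | 0 < p.2},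
          ENNReal.ofReal |(fderivHyperboloidCoord z.re z.im p).det| * g (F p) := by
        refine setLIntegral_congr_fun hs fun p hp => ?_
        have hp : 0 < p.2 := hp
        have hz := z.im_pos
        simp only [hg]
        rw [one_add_sq_hyperboloidCoord _ _ hp.ne' hz.ne', Real.sqrt_sq (by positivity),
          det_fderivHyperboloidCoord _ _ hp.ne' hz.ne', ← mul_assoc,
          ← ENNReal.ofReal_mul (by positivity), neg_mul, abs_neg, abs_of_nonneg (by positivity)]
        congr 2
        field_simp
    _ = ∫⁻ v in F '' {p : ℝ × ℝ | 0 < p.2}, g v :=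
        (lintegral_image_eq_lintegral_abs_det_fderiv_mul volume hs
          (fun p hp => (hasFDerivAt_hyperboloidCoord _ _ (ne_of_gt hp)).hasFDerivWithinAt)
          (injOn_hyperboloidCoord _ z.im_pos) g).symm
    _ ≤ ∫⁻ v, g v := setLIntegral_le_lintegral _ _
    _ = ∫⁻ p in Set.Ioi (0 : ℝ) ×ˢ Set.Ioo (-π) π,
          ENNReal.ofReal p.1 * (ENNReal.ofReal (√(1 + p.1 ^ 2))⁻¹ * h p.1) := by
        rw [← lintegral_comp_polarCoord_symm, polarCoord_target]
        refine setLIntegral_congr_fun (measurableSet_Ioi.prod measurableSet_Ioo) fun p hp => ?_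
        have hp : 0 < p.1 := hp.1
        have hr : (p.1 * cos p.2) ^ 2 + (p.1 * sin p.2) ^ 2 = p.1 ^ 2 := by
          rw [mul_pow, mul_pow, ← mul_add, cos_sq_add_sin_sq, mul_one]
        simp only [hg, polarCoord_symm_apply, smul_eq_mul, hr, Real.sqrt_sq hp.le]
    _ = _ := by
        rw [Measure.volume_eq_prod, ← Measure.prod_restrict,
          lintegral_prod _ (by fun_prop)]
        simp only [lintegral_const, Measure.restrict_apply_univ, Real.volume_Ioo]
        rw [lintegral_mul_const _ (by fun_prop), mul_comm]
        congr 2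
        ring

theorem lintegral_inv_sqrt_one_add_sq {s : ℝ} (hs : 0 ≤ s) :
    ∫⁻ ρ in Set.Ioc 0 s, ENNReal.ofReal (√(1 + ρ ^ 2))⁻¹ = ENNReal.ofReal (arsinh s) := by
  have hc : Continuous fun ρ : ℝ => (√(1 + ρ ^ 2))⁻¹ :=
    Continuous.inv₀ (by fun_prop) fun ρ => by positivity
  rw [← ofReal_integral_eq_lintegral_ofReal (hc.integrableOn_Ioc)
      (Filter.Eventually.of_forall fun ρ => by positivity),
    ← intervalIntegral.integral_of_le hs,
    intervalIntegral.integral_eq_sub_of_hasDerivAt (fun x _ => hasDerivAt_arsinh x)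
      (hc.intervalIntegrable _ _), arsinh_zero, sub_zero]

/-- The function `1 / sinh` of the distance, cut off at radius `m`. -/
noncomputable def truncatedInvSinh (m r : ℝ) : ℝ := if r ≤ m then 1 / sinh r else 0

theorem lintegral_truncatedInvSinh_le (z : UpperHalfPlane) {m : ℝ} (hm : 0 ≤ m) :
    ∫⁻ x, ENNReal.ofReal (truncatedInvSinh m (dist x z)) ∂hypVolume ≤
      ENNReal.ofReal (2 * π * m) := by
  set h : ℝ → ℝ≥0∞ := (Set.Iic (sinh m)).indicator fun ρ => ENNReal.ofReal (1 / ρ) with hh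
  have hhm : Measurable h := Measurable.indicator (by fun_prop) measurableSet_Iic
  calc ∫⁻ x, ENNReal.ofReal (truncatedInvSinh m (dist x z)) ∂hypVolume
      = ∫⁻ x, h (sinh (dist x z)) ∂hypVolume := by
        refine lintegral_congr fun x => ?_
        by_cases hx : dist x z ≤ m <;> simp [hh, truncatedInvSinh, hx]
    _ ≤ _ := lintegral_comp_sinh_dist_le z hhm
    _ = ENNReal.ofReal (2 * π) *
        ∫⁻ ρ in Set.Ioc 0 (sinh m), ENNReal.ofReal (√(1 + ρ ^ 2))⁻¹ := by
        rw [← Set.Ioi_inter_Iic, Set.inter_comm, ← setLIntegral_indicator measurableSet_Iic]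
        congr 1
        refine setLIntegral_congr_fun measurableSet_Ioi fun ρ hρ => ?_
        have hρ : 0 < ρ := hρ
        by_cases hx : ρ ≤ sinh m
        · simp only [hh, Set.indicator_of_mem (Set.mem_Iic.2 hx)]
          rw [mul_left_comm, ← ENNReal.ofReal_mul hρ.le, mul_one_div_cancel hρ.ne']
          simp
        · simp [hh, hx]
    _ = ENNReal.ofReal (2 * π * m) := by
        rw [lintegral_inv_sqrt_one_add_sq (sinh_nonneg_iff.2 hm), arsinh_sinh,
          ← ENNReal.ofReal_mul (by positivity)]

theorem truncatedInvSinh_nonneg {m r : ℝ} (hr : 0 ≤ r) : 0 ≤ truncatedInvSinh m r := by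
  have := sinh_nonneg_iff.2 hr
  unfold truncatedInvSinh
  split_ifs <;> positivity

theorem inv_sqrt_sinh_mul_le {r s t t' : ℝ} (hr : 0 ≤ r) (hrs : r ≤ s) (ht : r ≤ t)
    (ht' : s ≤ t') :
    1 / (√(sinh r) * √(sinh s)) ≤ truncatedInvSinh (min t t') r := by
  rw [truncatedInvSinh, if_pos (le_min ht (hrs.trans ht'))]
  rcases hr.eq_or_lt with rfl | hr
  · simp
  have h0 : 0 < sinh r := sinh_pos_iff.2 hr
  refine one_div_le_one_div_of_le h0 ?_
  calc sinh r = √(sinh r) * √(sinh r) := (Real.mul_self_sqrt h0.le).symm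
    _ ≤ √(sinh r) * √(sinh s) := by gcongr; exact sinh_le_sinh.2 hrs

theorem cutoff_inv_sqrt_sinh_mul_le {r s : ℝ} (t t' : ℝ) (hr : 0 ≤ r) (hs : 0 ≤ s) :
    (if r ≤ t then (1:ℝ) else 0) * (if s ≤ t' then (1:ℝ) else 0) / (√(sinh r) * √(sinh s)) ≤
      truncatedInvSinh (min t t') r + truncatedInvSinh (min t t') s := by
  have h1 := truncatedInvSinh_nonneg (m := min t t') hr
  have h2 := truncatedInvSinh_nonneg (m := min t t') hs
  by_cases ht : r ≤ t
  · by_cases ht' : s ≤ t'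
    · simp only [ht, ht', if_true, mul_one]
      rcases le_total r s with h | h
      · linarith [inv_sqrt_sinh_mul_le hr h ht ht']
      · have := inv_sqrt_sinh_mul_le hs h ht' ht
        rw [mul_comm, min_comm] at this
        linarith
    · simpa [ht'] using add_nonneg h1 h2
  · simpa [ht] using add_nonneg h1 h2

/-- For `z, z' ∈ ℍ` and `t, t' > 0`,
`∫_ℍ 1_{[0,t]}(d(x,z)) 1_{[0,t']}(d(x,z')) / (√sinh(d(x,z)) √sinh(d(x,z'))) dx ≤
 1_{[0,t+t']}(d(z,z')) · 4π min(t,t')`. -/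
theorem sinh_singular_product_integral_bound (z z' : UpperHalfPlane) (t t' : ℝ)
    (ht : 0 < t) (ht' : 0 < t') :
    ∫ x, (if dist x z ≤ t then (1:ℝ) else 0) * (if dist x z' ≤ t' then (1:ℝ) else 0) /
          (Real.sqrt (Real.sinh (dist x z)) * Real.sqrt (Real.sinh (dist x z'))) ∂hypVolume
      ≤ (if dist z z' ≤ t + t' then (1:ℝ) else 0) * (4 * Real.pi * min t t') := by
  have hm : 0 ≤ min t t' := (lt_min ht ht').le
  by_cases hd : dist z z' ≤ t + t'
  · rw [if_pos hd, one_mul]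
    refine (Real.le_norm_self _).trans ((norm_integral_le_lintegral_norm _).trans ?_)
    refine ENNReal.toReal_le_of_le_ofReal (by positivity) ?_
    have hmeas : Measurable fun x : UpperHalfPlane =>
        ENNReal.ofReal (truncatedInvSinh (min t t') (dist x z)) := by
      have hdist : Measurable fun x : UpperHalfPlane => dist x z :=
        (continuous_id.dist continuous_const).measurable
      refine ENNReal.measurable_ofReal.comp (Measurable.ite ?_ ?_ measurable_const)
      · exact measurableSet_le hdist measurable_const
      · exact measurable_const.div (measurable_sinh.comp hdist)
    calc _ ≤ ∫⁻ x, (ENNReal.ofReal (truncatedInvSinh (min t t') (dist x z)) +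
            ENNReal.ofReal (truncatedInvSinh (min t t') (dist x z'))) ∂hypVolume := by
          refine lintegral_mono fun x => ?_
          rw [← ENNReal.ofReal_add (truncatedInvSinh_nonneg dist_nonneg)
            (truncatedInvSinh_nonneg dist_nonneg), Real.norm_of_nonneg (by positivity)]
          exact ENNReal.ofReal_le_ofReal
            (cutoff_inv_sqrt_sinh_mul_le t t' dist_nonneg dist_nonneg)
      _ ≤ ENNReal.ofReal (2 * π * min t t') + ENNReal.ofReal (2 * π * min t t') := by
          rw [lintegral_add_left hmeas]
          exact add_le_add (lintegral_truncatedInvSinh_le z hm)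
            (lintegral_truncatedInvSinh_le z' hm)
      _ = ENNReal.ofReal (4 * π * min t t') := by
          rw [← ENNReal.ofReal_add (by positivity) (by positivity)]
          ring_nf
  · rw [if_neg hd, zero_mul]
    refine (integral_eq_zero_of_ae (Filter.Eventually.of_forall fun x => ?_)).le
    by_cases h1 : dist x z ≤ t
    · have h2 : ¬ dist x z' ≤ t' := fun h2 => hd <|
        (dist_triangle_left z z' x).trans (add_le_add h1 h2)
      simp [h2]
    · simp [h1]
end
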